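/- Let n ≥ 5, p ≥ 1 and n/(n−4) < s < (n+4)/(n−4). Let U = (u_1, …, u_p) be a nonnegative superharmonic C⁴ solution of Δ² u_i = |U|^{s−1} u_i on the punctured unit ball B₁ \ {0} ⊂ ℝ^n. If |U(x)| = o(|x|^{−4/(s−1)}) as x → 0 (i.e., lim_{x→0} |x|^{4/(s−1)} |U(x)| = 0), then the origin is a removable singularity: U extends to a continuous function on all of B₁. -/

import Mathlib

open MeasureTheory Metric Filter Topology

/-- The Euclidean Laplacian: sum of second partial derivatives. -/
noncomputable def lap {n : ℕ} (u : EuclideanSpace ℝ (Fin n) → ℝ)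
    (x : EuclideanSpace ℝ (Fin n)) : ℝ :=
  ∑ i : Fin n,
    fderiv ℝ (fun y => fderiv ℝ u y (EuclideanSpace.single i 1)) x
      (EuclideanSpace.single i 1)

/-- The bi-Laplacian Δ² = Δ ∘ Δ. -/
noncomputable def bilap {n : ℕ} (u : EuclideanSpace ℝ (Fin n) → ℝ) :
    EuclideanSpace ℝ (Fin n) → ℝ :=
  lap (lap u)

/-- The pointwise Euclidean norm |U(x)| of a p-map U. -/
noncomputable def vnorm {n p : ℕ} (U : Fin p → EuclideanSpace ℝ (Fin n) → ℝ)
    (x : EuclideanSpace ℝ (Fin n)) : ℝ :=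
  Real.sqrt (∑ i, U i x ^ 2)

section basics
variable {n : ℕ}

lemma fderiv_diff_of_contDiffAt_two {f : EuclideanSpace ℝ (Fin n) → ℝ}
    {x : EuclideanSpace ℝ (Fin n)} (hf : ContDiffAt ℝ 2 f x) :
    DifferentiableAt ℝ (fderiv ℝ f) x :=
  (hf.fderiv_right (m := 1) (by norm_num)).differentiableAt (by norm_num)

lemma fderiv_fderiv_apply {f : EuclideanSpace ℝ (Fin n) → ℝ}
    {x : EuclideanSpace ℝ (Fin n)} (hf : ContDiffAt ℝ 2 f x) (v : EuclideanSpace ℝ (Fin n)) :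
    fderiv ℝ (fun y => fderiv ℝ f y v) x v = fderiv ℝ (fderiv ℝ f) x v v := by
  have h := fderiv_diff_of_contDiffAt_two hf
  rw [fderiv_clm_apply h (differentiableAt_const v)]
  simp

lemma lap_eq_sum {f : EuclideanSpace ℝ (Fin n) → ℝ}
    {x : EuclideanSpace ℝ (Fin n)} (hf : ContDiffAt ℝ 2 f x) :
    lap f x = ∑ i : Fin n, fderiv ℝ (fderiv ℝ f) x (EuclideanSpace.single i 1)
      (EuclideanSpace.single i 1) := by
  unfold lap
  exact Finset.sum_congr rfl fun i _ => fderiv_fderiv_apply hf _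

lemma lap_eq_laplacian {f : EuclideanSpace ℝ (Fin n) → ℝ}
    {x : EuclideanSpace ℝ (Fin n)} (hf : ContDiffAt ℝ 2 f x) :
    lap f x = Laplacian.laplacian f x := by
  rw [lap_eq_sum hf, InnerProductSpace.laplacian_eq_iteratedFDeriv_orthonormalBasis f
    (EuclideanSpace.basisFun (Fin n) ℝ)]
  simp [iteratedFDeriv_two_apply]

lemma lap_eq_sum_basis {f : EuclideanSpace ℝ (Fin n) → ℝ}
    {x : EuclideanSpace ℝ (Fin n)} (hf : ContDiffAt ℝ 2 f x)
    (b : OrthonormalBasis (Fin n) ℝ (EuclideanSpace ℝ (Fin n))) :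
    lap f x = ∑ i : Fin n, fderiv ℝ (fderiv ℝ f) x (b i) (b i) := by
  rw [lap_eq_laplacian hf, InnerProductSpace.laplacian_eq_iteratedFDeriv_orthonormalBasis f b]
  simp [iteratedFDeriv_two_apply]

lemma lap_congr {f g : EuclideanSpace ℝ (Fin n) → ℝ}
    {x : EuclideanSpace ℝ (Fin n)} (h : f =ᶠ[𝓝 x] g) : lap f x = lap g x := by
  unfold lap
  refine Finset.sum_congr rfl fun i _ => ?_
  have : (fun y => fderiv ℝ f y (EuclideanSpace.single i 1)) =ᶠ[𝓝 x]
      (fun y => fderiv ℝ g y (EuclideanSpace.single i 1)) := by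
    filter_upwards [h.fderiv (𝕜 := ℝ)] with y hy
    rw [hy]
  rw [this.fderiv_eq]

lemma lap_add {f g : EuclideanSpace ℝ (Fin n) → ℝ}
    {x : EuclideanSpace ℝ (Fin n)} (hf : ContDiffAt ℝ 2 f x) (hg : ContDiffAt ℝ 2 g x) :
    lap (fun y => f y + g y) x = lap f x + lap g x := by
  rw [lap_eq_laplacian hf, lap_eq_laplacian hg, lap_eq_laplacian (hf.add hg)]
  exact hf.laplacian_add hg

lemma lap_sub {f g : EuclideanSpace ℝ (Fin n) → ℝ}
    {x : EuclideanSpace ℝ (Fin n)} (hf : ContDiffAt ℝ 2 f x) (hg : ContDiffAt ℝ 2 g x) :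
    lap (fun y => f y - g y) x = lap f x - lap g x := by
  rw [lap_eq_laplacian hf, lap_eq_laplacian hg, lap_eq_laplacian (hf.sub hg)]
  exact hf.laplacian_sub hg

lemma lap_const_mul {f : EuclideanSpace ℝ (Fin n) → ℝ}
    {x : EuclideanSpace ℝ (Fin n)} (c : ℝ) (hf : ContDiffAt ℝ 2 f x) :
    lap (fun y => c * f y) x = c * lap f x := by
  rw [lap_eq_laplacian hf, lap_eq_laplacian (contDiffAt_const.mul hf)]
  exact InnerProductSpace.laplacian_smul c hf

lemma lap_neg {f : EuclideanSpace ℝ (Fin n) → ℝ}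
    {x : EuclideanSpace ℝ (Fin n)} (hf : ContDiffAt ℝ 2 f x) :
    lap (fun y => - f y) x = - lap f x := by
  have := lap_const_mul (-1) hf
  simpa using this

lemma lap_const (c : ℝ) (x : EuclideanSpace ℝ (Fin n)) :
    lap (fun _ => c) x = 0 := by
  simp [lap]

/-- second derivative along a line. -/
lemma line_hasDerivAt {f : EuclideanSpace ℝ (Fin n) → ℝ}
    {x : EuclideanSpace ℝ (Fin n)} (hf : ContDiffAt ℝ 2 f x) (v : EuclideanSpace ℝ (Fin n)) :
    ∀ᶠ t in 𝓝 (0 : ℝ), HasDerivAt (fun t : ℝ => f (x + t • v)) (fderiv ℝ f (x + t • v) v) t := by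
  have hc : Tendsto (fun t : ℝ => x + t • v) (𝓝 0) (𝓝 x) := by
    have : Continuous (fun t : ℝ => x + t • v) := by fun_prop
    simpa using this.tendsto 0
  have h1 : ∀ᶠ y in 𝓝 x, DifferentiableAt ℝ f y := by
    filter_upwards [hf.eventually (by simp)] with y hy
    exact hy.differentiableAt (by norm_num)
  filter_upwards [hc.eventually h1] with t ht
  have h2 : HasDerivAt (fun t : ℝ => x + t • v) v t := by
    simpa using ((hasDerivAt_id t).smul_const v).const_add x
  exact ht.hasFDerivAt.comp_hasDerivAt t h2

lemma line_hasDerivAt_two {f : EuclideanSpace ℝ (Fin n) → ℝ}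
    {x : EuclideanSpace ℝ (Fin n)} (hf : ContDiffAt ℝ 2 f x) (v : EuclideanSpace ℝ (Fin n)) :
    HasDerivAt (fun t : ℝ => fderiv ℝ f (x + t • v) v) (fderiv ℝ (fderiv ℝ f) x v v) 0 := by
  have h2 : HasDerivAt (fun t : ℝ => x + t • v) v 0 := by
    simpa using ((hasDerivAt_id (0:ℝ)).smul_const v).const_add x
  have h3 : HasFDerivAt (fderiv ℝ f) (fderiv ℝ (fderiv ℝ f) x) (x + (0:ℝ) • v) := by
    simpa using (fderiv_diff_of_contDiffAt_two hf).hasFDerivAt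
  have h4 := h3.comp_hasDerivAt (0:ℝ) h2
  simpa using h4.clm_apply (hasDerivAt_const (0:ℝ) v)

/-- necessary second order condition at a local maximum in one variable -/
lemma second_deriv_nonpos {g g' : ℝ → ℝ} {c : ℝ} (hg : ∀ᶠ t in 𝓝 (0 : ℝ), HasDerivAt g (g' t) t)
    (hg' : HasDerivAt g' c 0) (hmax : IsLocalMax g 0) : c ≤ 0 := by
  by_contra hc
  push Not at hc
  have e1 : deriv g =ᶠ[𝓝 0] g' := by
    filter_upwards [hg] with t ht using ht.deriv
  have e2 : deriv (deriv g) 0 = c := by rw [e1.deriv_eq, hg'.deriv]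
  have hmin : IsLocalMin g 0 := isLocalMin_of_deriv_deriv_pos (by rw [e2]; exact hc)
    hmax.deriv_eq_zero hg.self_of_nhds.continuousAt
  have hconst : g =ᶠ[𝓝 0] fun _ => g 0 := by
    filter_upwards [hmax, hmin] with t h1 h2 using le_antisymm h1 h2
  have e3 : deriv g =ᶠ[𝓝 0] fun _ => 0 := by
    have := hconst.deriv
    simpa using this
  have e4 : deriv (deriv g) 0 = 0 := by rw [e3.deriv_eq]; simp
  linarith

lemma lap_nonpos_of_isLocalMax {f : EuclideanSpace ℝ (Fin n) → ℝ}
    {x : EuclideanSpace ℝ (Fin n)} (hf : ContDiffAt ℝ 2 f x) (h : IsLocalMax f x) :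
    lap f x ≤ 0 := by
  rw [lap_eq_sum hf]
  refine Finset.sum_nonpos fun i _ => ?_
  refine second_deriv_nonpos (line_hasDerivAt hf _) (line_hasDerivAt_two hf _) ?_
  have hc : Tendsto (fun t : ℝ => x + t • (EuclideanSpace.single i (1:ℝ))) (𝓝 0) (𝓝 x) := by
    have : Continuous (fun t : ℝ => x + t • (EuclideanSpace.single i (1:ℝ))) := by fun_prop
    simpa using this.tendsto 0
  filter_upwards [hc.eventually h] with t ht
  simpa using ht

lemma contDiffAt_norm_rpow (c : ℝ) {x : EuclideanSpace ℝ (Fin n)} (hx : x ≠ 0) {m : WithTop ℕ∞} :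
    ContDiffAt ℝ m (fun y : EuclideanSpace ℝ (Fin n) => ‖y‖ ^ c) x :=
  (contDiffAt_norm ℝ hx).rpow_const_of_ne (norm_ne_zero_iff.2 hx)

lemma hasFDerivAt_norm_rpow' (c : ℝ) {x : EuclideanSpace ℝ (Fin n)} (hx : x ≠ 0) :
    HasFDerivAt (fun y : EuclideanSpace ℝ (Fin n) => ‖y‖ ^ c)
      ((c * ‖x‖ ^ (c - 2)) • innerSL ℝ x) x := by
  have hpos : 0 < ‖x‖ := norm_pos_iff.2 hx
  have h1 : HasFDerivAt (fun y : EuclideanSpace ℝ (Fin n) => ‖y‖ ^ 2) (2 • innerSL ℝ x) x :=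
    (hasStrictFDerivAt_norm_sq x).hasFDerivAt
  have h2 := h1.rpow_const (p := c / 2) (Or.inl (by positivity))
  have e : (fun y : EuclideanSpace ℝ (Fin n) => (‖y‖ ^ 2) ^ (c / 2)) = fun y => ‖y‖ ^ c := by
    ext y
    rw [← Real.rpow_natCast, ← Real.rpow_mul (norm_nonneg _)]
    congr 1; push_cast; ring
  rw [e] at h2
  have e3 : (‖x‖ ^ 2) ^ (c / 2 - 1) = ‖x‖ ^ (c - 2) := by
    rw [← Real.rpow_natCast, ← Real.rpow_mul (norm_nonneg _)]
    congr 1; push_cast; ring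
  rw [e3] at h2
  refine h2.congr_fderiv ?_
  ext v
  simp
  ring

lemma lap_norm_rpow (c : ℝ) {x : EuclideanSpace ℝ (Fin n)} (hx : x ≠ 0) :
    lap (fun y : EuclideanSpace ℝ (Fin n) => ‖y‖ ^ c) x = c * (c + n - 2) * ‖x‖ ^ (c - 2) := by
  have hpos : 0 < ‖x‖ := norm_pos_iff.2 hx
  have key : ∀ i : Fin n, fderiv ℝ (fun y => fderiv ℝ
      (fun y : EuclideanSpace ℝ (Fin n) => ‖y‖ ^ c) y (EuclideanSpace.single i 1)) x
      (EuclideanSpace.single i 1) = c * ‖x‖ ^ (c - 2)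
        + c * (c - 2) * ‖x‖ ^ (c - 2 - 2) * (x i) ^ 2 := by
    intro i
    have e : (fun y => fderiv ℝ
      (fun y : EuclideanSpace ℝ (Fin n) => ‖y‖ ^ c) y (EuclideanSpace.single i 1)) =ᶠ[𝓝 x]
      fun y => (c * ‖y‖ ^ (c - 2)) * y i := by
      filter_upwards [isOpen_ne.mem_nhds hx] with y hy
      rw [(hasFDerivAt_norm_rpow' c hy).fderiv]
      simp [EuclideanSpace.inner_single_right]
    rw [e.fderiv_eq]
    have h1 := (hasFDerivAt_norm_rpow' (c - 2) hx).const_mul c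
    have h2 : HasFDerivAt (fun y : EuclideanSpace ℝ (Fin n) => y i)
      (EuclideanSpace.proj i : EuclideanSpace ℝ (Fin n) →L[ℝ] ℝ) x :=
      (EuclideanSpace.proj i : EuclideanSpace ℝ (Fin n) →L[ℝ] ℝ).hasFDerivAt
    have h3 : HasFDerivAt (fun y : EuclideanSpace ℝ (Fin n) => (c * ‖y‖ ^ (c - 2)) * y i) _ x :=
      h1.mul h2
    rw [h3.fderiv]
    simp [EuclideanSpace.inner_single_right]
    ring
  unfold lap
  rw [Finset.sum_congr rfl fun i _ => key i, Finset.sum_add_distrib, ← Finset.mul_sum _ _ (c * (c - 2) * ‖x‖ ^ (c - 2 - 2))]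
  have : ∑ i, x i ^ 2 = ‖x‖ ^ 2 := by
    rw [EuclideanSpace.norm_sq_eq]; simp
  rw [this, mul_assoc, ← Real.rpow_natCast ‖x‖ 2, ← Real.rpow_add hpos]
  have : c - 2 - 2 + ((2:ℕ):ℝ) = c - 2 := by push_cast; ring
  rw [this]
  simp
  ring

lemma contDiffOn_lap {f : EuclideanSpace ℝ (Fin n) → ℝ} {s : Set (EuclideanSpace ℝ (Fin n))}
    (hs : IsOpen s) (hf : ContDiffOn ℝ 4 f s) : ContDiffOn ℝ 2 (lap f) s := by
  unfold lap
  refine ContDiffOn.sum fun i _ => ?_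
  have h1 : ContDiffOn ℝ 3 (fun y => fderiv ℝ f y (EuclideanSpace.single i 1)) s :=
    (hf.fderiv_of_isOpen hs (by norm_num)).clm_apply contDiffOn_const
  exact (h1.fderiv_of_isOpen hs (by norm_num)).clm_apply contDiffOn_const

end basics

section keyest
variable {n : ℕ}

lemma fderiv_aff {f : EuclideanSpace ℝ (Fin n) → ℝ} (hf : Differentiable ℝ f)
    (x0 : EuclideanSpace ℝ (Fin n)) (t : ℝ) (y v : EuclideanSpace ℝ (Fin n)) :
    fderiv ℝ (fun y => f (x0 + t • y)) y v = t * fderiv ℝ f (x0 + t • y) v := by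
  have h2 : HasFDerivAt (fun y : EuclideanSpace ℝ (Fin n) => x0 + t • y)
      (t • ContinuousLinearMap.id ℝ _) y :=
    ((hasFDerivAt_id y).const_smul t).const_add x0
  have h3 := (hf (x0 + t • y)).hasFDerivAt.comp y h2
  have h4 : HasFDerivAt (fun y => f (x0 + t • y)) _ y := h3
  rw [h4.fderiv]
  simp

lemma lap_aff {f : EuclideanSpace ℝ (Fin n) → ℝ} (hf : ContDiff ℝ 2 f)
    (x0 : EuclideanSpace ℝ (Fin n)) (t : ℝ) (y : EuclideanSpace ℝ (Fin n)) :
    lap (fun y => f (x0 + t • y)) y = t ^ 2 * lap f (x0 + t • y) := by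
  unfold lap
  rw [Finset.mul_sum]
  refine Finset.sum_congr rfl fun i _ => ?_
  have e : (fun y => fderiv ℝ (fun y => f (x0 + t • y)) y (EuclideanSpace.single i 1))
      = fun y => t * (fun z => fderiv ℝ f z (EuclideanSpace.single i 1)) (x0 + t • y) := by
    ext y
    exact fderiv_aff (hf.differentiable (by norm_num)) x0 t y _
  have hd : ContDiff ℝ 1 (fun z => fderiv ℝ f z (EuclideanSpace.single i 1)) :=
    (hf.fderiv_right (m := 1) (by norm_num)).clm_apply contDiff_const
  have hd' := hd.differentiable (by norm_num)
  rw [e, fderiv_const_mul (by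
    exact (hd'.comp (by fun_prop : Differentiable ℝ
      (fun y : EuclideanSpace ℝ (Fin n) => x0 + t • y))) y)]
  have := fderiv_aff hd' x0 t y (EuclideanSpace.single i 1)
  simp only [smul_apply, smul_eq_mul] at this ⊢
  rw [this]; ring

lemma ibp1 {f g : EuclideanSpace ℝ (Fin n) → ℝ} (hf : ContDiff ℝ 1 f) (hg : ContDiff ℝ 1 g)
    (hs : HasCompactSupport g) (v : EuclideanSpace ℝ (Fin n)) :
    ∫ x, f x * fderiv ℝ g x v = - ∫ x, fderiv ℝ f x v * g x := by
  have cf : Continuous (fun x => fderiv ℝ f x v) :=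
    (hf.continuous_fderiv (by norm_num)).clm_apply continuous_const
  have cg : Continuous (fun x => fderiv ℝ g x v) :=
    (hg.continuous_fderiv (by norm_num)).clm_apply continuous_const
  refine integral_mul_fderiv_eq_neg_fderiv_mul_of_integrable ?_ ?_ ?_
    (fun x _ => hf.differentiable (by norm_num) x) (fun x _ => hg.differentiable (by norm_num) x)
  · exact (cf.mul hg.continuous).integrable_of_hasCompactSupport hs.mul_left
  · exact (hf.continuous.mul cg).integrable_of_hasCompactSupport (hs.fderiv_apply ℝ v).mul_left
  · exact (hf.continuous.mul hg.continuous).integrable_of_hasCompactSupport hs.mul_left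

lemma contDiff_pd {f : EuclideanSpace ℝ (Fin n) → ℝ} (hf : ContDiff ℝ 2 f)
    (v : EuclideanSpace ℝ (Fin n)) : ContDiff ℝ 1 (fun z => fderiv ℝ f z v) :=
  (hf.fderiv_right (m := 1) (by norm_num)).clm_apply contDiff_const

lemma continuous_pdd {f : EuclideanSpace ℝ (Fin n) → ℝ} (hf : ContDiff ℝ 2 f)
    (v : EuclideanSpace ℝ (Fin n)) :
    Continuous (fun y => fderiv ℝ (fun z => fderiv ℝ f z v) y v) :=
  ((contDiff_pd hf v).continuous_fderiv (by norm_num)).clm_apply continuous_const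

lemma continuous_lap {f : EuclideanSpace ℝ (Fin n) → ℝ} (hf : ContDiff ℝ 2 f) :
    Continuous (lap f) := by
  unfold lap
  exact continuous_finsetSum _ fun i _ => continuous_pdd hf _

/-- weak form: `∑ ∫ ∂ᵢf ∂ᵢg = - ∫ (Δ f) g` -/
lemma ibp_grad {f g : EuclideanSpace ℝ (Fin n) → ℝ} (hf : ContDiff ℝ 2 f) (hg : ContDiff ℝ 1 g)
    (hs : HasCompactSupport g) :
    ∑ i : Fin n, ∫ x, fderiv ℝ f x (EuclideanSpace.single i 1) *
      fderiv ℝ g x (EuclideanSpace.single i 1) = - ∫ x, lap f x * g x := by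
  have e : ∀ i : Fin n, ∫ x, fderiv ℝ f x (EuclideanSpace.single i 1) *
      fderiv ℝ g x (EuclideanSpace.single i 1) = - ∫ x, fderiv ℝ (fun z => fderiv ℝ f z
        (EuclideanSpace.single i 1)) x (EuclideanSpace.single i 1) * g x :=
    fun i => ibp1 (contDiff_pd hf _) hg hs _
  rw [Finset.sum_congr rfl fun i _ => e i, Finset.sum_neg_distrib]
  congr 1
  rw [← integral_finsetSum]
  · refine integral_congr_ae (ae_of_all _ fun x => ?_)
    simp only [lap, Finset.sum_mul]
  · intro i _
    exact ((continuous_pdd hf _).mul hg.continuous).integrable_of_hasCompactSupport hs.mul_left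

lemma ibp_lap {f g : EuclideanSpace ℝ (Fin n) → ℝ} (hf : ContDiff ℝ 2 f) (hg : ContDiff ℝ 2 g)
    (hs : HasCompactSupport g) :
    ∫ x, lap f x * g x = ∫ x, f x * lap g x := by
  have h1 := ibp_grad hf (hg.of_le (by norm_num)) hs
  have e : ∀ i : Fin n, ∫ x, f x * fderiv ℝ (fun z => fderiv ℝ g z
        (EuclideanSpace.single i 1)) x (EuclideanSpace.single i 1)
        = - ∫ x, fderiv ℝ f x (EuclideanSpace.single i 1) *
      fderiv ℝ g x (EuclideanSpace.single i 1) :=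
    fun i => ibp1 (hf.of_le (by norm_num)) (contDiff_pd hg _) (hs.fderiv_apply ℝ _) _
  have h2 : ∫ x, f x * lap g x = ∑ i : Fin n, ∫ x, f x * fderiv ℝ (fun z => fderiv ℝ g z
        (EuclideanSpace.single i 1)) x (EuclideanSpace.single i 1) := by
    rw [← integral_finsetSum]
    · refine integral_congr_ae (ae_of_all _ fun x => ?_)
      simp only [lap, Finset.mul_sum]
    · intro i _
      exact (hf.continuous.mul (continuous_pdd hg _)).integrable_of_hasCompactSupport
        ((hs.fderiv_apply ℝ _).fderiv_apply ℝ _).mul_left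
  rw [h2, Finset.sum_congr rfl fun i _ => e i, Finset.sum_neg_distrib, h1]
  simp

lemma exists_kernel (n : ℕ) : ∃ η H : EuclideanSpace ℝ (Fin n) → ℝ,
    ContDiff ℝ 2 η ∧ ContDiff ℝ 1 H ∧ (∀ y, 0 ≤ η y) ∧ η 0 = 1 ∧ (∀ y, H y ≤ 0) ∧
    (∀ y, 1 ≤ ‖y‖ → η y = 0) ∧ (∀ y, 1 ≤ ‖y‖ → H y = 0) ∧
    (∀ y v, fderiv ℝ H y v = η y * inner ℝ y v) := by
  have cφ : Continuous (fun s : ℝ => Real.smoothTransition (1 - s)) :=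
    Real.smoothTransition.continuous.comp (by fun_prop)
  have hη : ContDiff ℝ 2 (fun y : EuclideanSpace ℝ (Fin n) =>
      Real.smoothTransition (1 - ‖y‖ ^ 2)) :=
    (Real.smoothTransition.contDiff (n := 2)).comp (contDiff_const.sub (contDiff_norm_sq ℝ))
  have hH : ∀ y : EuclideanSpace ℝ (Fin n), HasFDerivAt (fun y : EuclideanSpace ℝ (Fin n) =>
      (1/2) * ∫ s in (1:ℝ)..(‖y‖ ^ 2), Real.smoothTransition (1 - s))
      (Real.smoothTransition (1 - ‖y‖ ^ 2) • innerSL ℝ y) y := by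
    intro y
    have h1 : HasFDerivAt (fun y : EuclideanSpace ℝ (Fin n) => ‖y‖ ^ 2) (2 • innerSL ℝ y) y :=
      (hasStrictFDerivAt_norm_sq y).hasFDerivAt
    have h2 := intervalIntegral.integral_hasDerivAt_right
      (cφ.intervalIntegrable 1 (‖y‖ ^ 2)) cφ.stronglyMeasurable.stronglyMeasurableAtFilter
      cφ.continuousAt
    have h3 := (h2.comp_hasFDerivAt y h1).const_mul (1/2)
    refine HasFDerivAt.congr_fderiv h3 ?_
    ext v
    simp
    ring
  refine ⟨_, fun y => (1/2) * ∫ s in (1:ℝ)..(‖y‖ ^ 2), Real.smoothTransition (1 - s), hη, ?_, fun y => Real.smoothTransition.nonneg _, by simp, ?_, ?_, ?_,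
    fun y v => ?_⟩
  · rw [contDiff_one_iff_fderiv]
    refine ⟨fun y => (hH y).differentiableAt, ?_⟩
    have : fderiv ℝ (fun y : EuclideanSpace ℝ (Fin n) =>
      (1/2) * ∫ s in (1:ℝ)..(‖y‖ ^ 2), Real.smoothTransition (1 - s)) = fun y =>
      (Real.smoothTransition (1 - ‖y‖ ^ 2) • innerSL ℝ y) := by
      ext1 y; exact (hH y).fderiv
    rw [this]
    exact hη.continuous.smul (innerSL ℝ).continuous
  · intro y
    have : 0 ≤ ∫ s in (‖y‖ ^ 2)..1, Real.smoothTransition (1 - s) ∨ 1 ≤ ‖y‖ ^ 2 := by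
      rcases le_total (‖y‖ ^ 2) 1 with h | h
      · exact Or.inl (intervalIntegral.integral_nonneg h fun s _ => Real.smoothTransition.nonneg _)
      · exact Or.inr h
    beta_reduce
    rcases this with h | h
    · rw [intervalIntegral.integral_symm]; linarith
    · rw [intervalIntegral.integral_congr (g := fun _ => (0:ℝ))]
      · simp
      · intro s hs
        rw [Set.uIcc_of_le h] at hs
        exact Real.smoothTransition.zero_of_nonpos (by linarith [hs.1])
  · intro y hy
    exact Real.smoothTransition.zero_of_nonpos (by nlinarith)
  · intro y hy
    have h : 1 ≤ ‖y‖ ^ 2 := by nlinarith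
    simp only
    rw [intervalIntegral.integral_congr (g := fun _ => (0:ℝ))]
    · simp
    · intro s hs
      rw [Set.uIcc_of_le h] at hs
      exact Real.smoothTransition.zero_of_nonpos (by linarith [hs.1])
  · rw [(hH y).fderiv]; simp

lemma hcs_of_zero {g : EuclideanSpace ℝ (Fin n) → ℝ} (h : ∀ y, 1 ≤ ‖y‖ → g y = 0) :
    HasCompactSupport g := by
  refine HasCompactSupport.intro (isCompact_closedBall (0 : EuclideanSpace ℝ (Fin n)) 1) ?_
  intro y hy
  apply h
  simp at hy
  exact hy.le

lemma h_deriv {v η : EuclideanSpace ℝ (Fin n) → ℝ} (hv : ContDiff ℝ 1 v) (hη : Continuous η)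
    (hη0 : ∀ y, 1 ≤ ‖y‖ → η y = 0) (x0 : EuclideanSpace ℝ (Fin n)) (t : ℝ) :
    HasDerivAt (fun t : ℝ => ∫ y, v (x0 + t • y) * η y)
      (∫ y, fderiv ℝ v (x0 + t • y) y * η y) t := by
  have hs := hcs_of_zero hη0
  have cF : Continuous (fun q : ℝ × EuclideanSpace ℝ (Fin n) =>
      fderiv ℝ v (x0 + q.1 • q.2) q.2 * η q.2) :=
    (((hv.continuous_fderiv (by norm_num)).comp (by fun_prop)).clm_apply continuous_snd).mul
      (hη.comp continuous_snd)
  obtain ⟨K, hK⟩ := ((isCompact_closedBall t 1).prod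
    (isCompact_closedBall (0 : EuclideanSpace ℝ (Fin n)) 1)).exists_bound_of_continuousOn
      cF.continuousOn
  have cv : ∀ t : ℝ, Continuous (fun y => v (x0 + t • y) * η y) := fun t =>
    (hv.continuous.comp (by fun_prop)).mul hη
  refine (hasDerivAt_integral_of_dominated_loc_of_deriv_le (s := closedBall t 1)
    (F' := fun t y => fderiv ℝ v (x0 + t • y) y * η y)
    (bound := Set.indicator (closedBall (0 : EuclideanSpace ℝ (Fin n)) 1) fun _ => K)
    (closedBall_mem_nhds t one_pos) (Eventually.of_forall fun t => (cv t).aestronglyMeasurable)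
    ((cv t).integrable_of_hasCompactSupport hs.mul_left) ?_ ?_ ?_ ?_).2
  · exact (cF.comp (by fun_prop : Continuous fun y => (t, y))).aestronglyMeasurable
  · refine ae_of_all _ fun y τ hτ => ?_
    by_cases hy : y ∈ closedBall (0 : EuclideanSpace ℝ (Fin n)) 1
    · rw [Set.indicator_of_mem hy]
      exact hK (τ, y) ⟨hτ, hy⟩
    · rw [Set.indicator_of_notMem hy, hη0 y (by simp at hy; exact hy.le)]
      simp
  · exact (integrable_indicator_iff measurableSet_closedBall).2
      (integrableOn_const (by exact (isCompact_closedBall _ _).measure_lt_top.ne))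
  · refine ae_of_all _ fun y τ _ => ?_
    have h2 : HasDerivAt (fun t : ℝ => x0 + t • y) y τ := by
      simpa using ((hasDerivAt_id τ).smul_const y).const_add x0
    exact (((hv.differentiable (by norm_num)) _).hasFDerivAt.comp_hasDerivAt τ h2).mul_const _

lemma h_deriv_eq {v η H : EuclideanSpace ℝ (Fin n) → ℝ} (hv : ContDiff ℝ 2 v) (hη : Continuous η)
    (hH : ContDiff ℝ 1 H)
    (hη0 : ∀ y, 1 ≤ ‖y‖ → η y = 0) (hH0 : ∀ y, 1 ≤ ‖y‖ → H y = 0)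
    (hHη : ∀ y v, fderiv ℝ H y v = η y * inner ℝ y v)
    (x0 : EuclideanSpace ℝ (Fin n)) (t : ℝ) (ht : t ≠ 0) :
    ∫ y, fderiv ℝ v (x0 + t • y) y * η y = - t * ∫ y, lap v (x0 + t • y) * H y := by
  have hva : ContDiff ℝ 2 (fun y => v (x0 + t • y)) := hv.comp (by fun_prop)
  have h1 := ibp_grad hva hH (hcs_of_zero hH0)
  have e1 : ∀ y, lap (fun y => v (x0 + t • y)) y * H y = t ^ 2 * (lap v (x0 + t • y) * H y) := by
    intro y; rw [lap_aff hv]; ring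
  simp_rw [e1] at h1
  rw [integral_const_mul, ← integral_finsetSum] at h1
  · have e2 : ∀ y, ∑ i : Fin n, fderiv ℝ (fun y => v (x0 + t • y)) y (EuclideanSpace.single i 1) *
      fderiv ℝ H y (EuclideanSpace.single i 1) = t * (fderiv ℝ v (x0 + t • y) y * η y) := by
      intro y
      have hy : y = ∑ i, (y i) • EuclideanSpace.single i (1:ℝ) := by
        have := (EuclideanSpace.basisFun (Fin n) ℝ).sum_repr y
        simpa using this.symm
      conv_rhs => rw [show fderiv ℝ v (x0 + t • y) y
        = fderiv ℝ v (x0 + t • y) (∑ i, (y i) • EuclideanSpace.single i (1:ℝ)) by rw [← hy]]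
      rw [map_sum, Finset.sum_mul, Finset.mul_sum]
      refine Finset.sum_congr rfl fun i _ => ?_
      rw [fderiv_aff (hv.differentiable (by norm_num)), hHη]
      simp [EuclideanSpace.inner_single_right]
      ring
    simp_rw [e2] at h1
    rw [integral_const_mul] at h1
    have h2 : t * (∫ y, fderiv ℝ v (x0 + t • y) y * η y)
      = t * (- t * ∫ y, lap v (x0 + t • y) * H y) := by rw [h1]; ring
    exact mul_left_cancel₀ ht h2
  · intro i _
    have c1 : Continuous fun y => fderiv ℝ (fun y => v (x0 + t • y)) y (EuclideanSpace.single i 1) :=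
      (contDiff_pd hva _).continuous
    have c2 : Continuous fun y => fderiv ℝ H y (EuclideanSpace.single i 1) :=
      (hH.continuous_fderiv (by norm_num)).clm_apply continuous_const
    exact (c1.mul c2).integrable_of_hasCompactSupport
      ((hcs_of_zero hH0).fderiv_apply ℝ _).mul_left

/-- global version of the key estimate -/
lemma key_global (n : ℕ) : ∃ C : ℝ, 0 ≤ C ∧ ∀ (u : EuclideanSpace ℝ (Fin n) → ℝ)
    (x0 : EuclideanSpace ℝ (Fin n)) (R M F : ℝ), ContDiff ℝ 4 u → 0 < R → 
    (∀ y ∈ closedBall x0 R, |u y| ≤ M) → (∀ y ∈ closedBall x0 R, lap (lap u) y ≤ F) → 0 ≤ F → 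
    - lap u x0 ≤ C * (M / R ^ 2 + F * R ^ 2) := by
  obtain ⟨η, H, hη, hH, hηn, hη1, hHn, hη0, hH0, hHη⟩ := exists_kernel n
  have hηs := hcs_of_zero hη0
  have hHs := hcs_of_zero hH0
  have hI : 0 < ∫ y, η y := hη.continuous.integral_pos_of_hasCompactSupport_nonneg_nonzero hηs
    hηn (x := 0) (by rw [hη1]; norm_num)
  set I := ∫ y, η y with hIdef
  set A := ∫ y, |lap η y| with hA
  set B := ∫ y, |H y| with hB
  have hA0 : 0 ≤ A := integral_nonneg fun y => abs_nonneg _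
  have hB0 : 0 ≤ B := integral_nonneg fun y => abs_nonneg _
  refine ⟨(A + B) / I, by positivity, ?_⟩
  intro u x0 R M F hu hR hM hF hF0
  have hM0 : 0 ≤ M := (abs_nonneg _).trans (hM x0 (by simp [hR.le]))
  have hmem : ∀ t ∈ Set.Icc (0:ℝ) R, ∀ y : EuclideanSpace ℝ (Fin n), ‖y‖ ≤ 1 →
      x0 + t • y ∈ closedBall x0 R := by
    intro t ht y hy
    simp only [mem_closedBall, dist_self_add_left, norm_smul, Real.norm_eq_abs, abs_of_nonneg ht.1]
    calc t * ‖y‖ ≤ R * 1 := mul_le_mul ht.2 hy (norm_nonneg _) hR.le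
      _ = R := mul_one R
  have hlu : ContDiff ℝ 2 (lap u) := by
    rw [← contDiffOn_univ]
    exact contDiffOn_lap isOpen_univ hu.contDiffOn
  set h : ℝ → ℝ := fun t => ∫ y, lap u (x0 + t • y) * η y with hh
  -- value at 0
  have h0 : h 0 = lap u x0 * I := by
    simp [hh, integral_const_mul, hIdef]
  -- lower bound at R
  have hlapη : ∀ y, 1 < ‖y‖ → lap η y = 0 := by
    intro y hy
    have : η =ᶠ[𝓝 y] fun _ => 0 := by
      filter_upwards [(isOpen_lt continuous_const continuous_norm).mem_nhds hy] with z hz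
      exact hη0 z (le_of_lt hz)
    rw [lap_congr this, lap_const]
  have hRval : - (M * A) ≤ R ^ 2 * h R := by
    have e1 : R ^ 2 * h R = ∫ y, u (x0 + R • y) * lap η y := by
      have hua : ContDiff ℝ 2 (fun y => u (x0 + R • y)) :=
        (hu.of_le (by norm_num)).comp (by fun_prop)
      rw [← ibp_lap hua hη hηs, hh, ← integral_const_mul]
      refine integral_congr_ae (ae_of_all _ fun y => ?_)
      simp only [lap_aff (hu.of_le (by norm_num : (2 : WithTop ℕ∞) ≤ 4))]
      ring
    rw [e1]
    have : |∫ y, u (x0 + R • y) * lap η y| ≤ ∫ y, M * |lap η y| := by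
      refine norm_integral_le_of_norm_le (f := fun y => u (x0 + R • y) * lap η y) ?_ (ae_of_all _ fun y => ?_)
      · have hc : HasCompactSupport (lap η) := by
          refine HasCompactSupport.intro (isCompact_closedBall (0 : EuclideanSpace ℝ (Fin n)) 1) ?_
          intro y hy
          apply hlapη
          simpa using hy
        exact (((continuous_lap hη).integrable_of_hasCompactSupport hc).abs).const_mul M
      · rw [Real.norm_eq_abs, abs_mul]
        rcases le_or_gt ‖y‖ 1 with hy | hy
        · exact mul_le_mul_of_nonneg_right (hM _ (hmem R ⟨hR.le, le_rfl⟩ y hy)) (abs_nonneg _)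
        · rw [hlapη y hy]; simp
    rw [integral_const_mul] at this
    exact (abs_le.1 this).1
  -- derivative bound
  have hder : ∀ t, HasDerivAt h (∫ y, fderiv ℝ (lap u) (x0 + t • y) y * η y) t :=
    fun t => h_deriv (hlu.of_le (by norm_num)) hη.continuous hη0 x0 t
  have hupper : ∀ t ∈ interior (Set.Icc (0:ℝ) R), deriv h t ≤ R * (F * B) := by
    intro t ht
    rw [interior_Icc] at ht
    rw [(hder t).deriv, h_deriv_eq hlu hη.continuous hH hη0 hH0 hHη x0 t ht.1.ne']
    have : ∫ y, lap (lap u) (x0 + t • y) * (- H y) ≤ ∫ y, F * |H y| := by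
      refine integral_mono ?_ ?_ fun y => ?_
      · exact (((continuous_lap hlu).comp (by fun_prop)).mul
          hH.continuous.neg).integrable_of_hasCompactSupport (hHs.neg.mul_left)
      · exact ((hH.continuous.integrable_of_hasCompactSupport hHs).abs).const_mul F
      · simp only
        rw [abs_of_nonpos (hHn y)]
        rcases le_or_gt ‖y‖ 1 with hy | hy
        · exact mul_le_mul_of_nonneg_right (hF _ (hmem t ⟨ht.1.le, ht.2.le⟩ y hy))
            (by linarith [hHn y])
        · rw [hH0 y hy.le]; simp
    rw [integral_const_mul] at this
    simp only [mul_neg, integral_neg] at this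
    have h3 : 0 ≤ F * B := by positivity
    calc -t * ∫ y, lap (lap u) (x0 + t • y) * H y
        = t * (-∫ y, lap (lap u) (x0 + t • y) * H y) := by ring
      _ ≤ t * (F * B) := by gcongr; exact ht.1.le
      _ ≤ R * (F * B) := by gcongr; exact ht.2.le
  have hmv := (convex_Icc (0:ℝ) R).image_sub_le_mul_sub_of_deriv_le
    (fun t _ => (hder t).continuousAt.continuousWithinAt)
    (fun t _ => (hder t).differentiableAt.differentiableWithinAt) hupper
    0 ⟨le_rfl, hR.le⟩ R ⟨hR.le, le_rfl⟩ hR.le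
  rw [h0, sub_zero] at hmv
  have h5 : - (M * A / R ^ 2) ≤ h R := by
    rw [← neg_div, div_le_iff₀ (by positivity)]
    linarith
  have h6 : - lap u x0 * I ≤ M * A / R ^ 2 + R * (F * B) * R := by linarith
  have h7 : M * A / R ^ 2 + R * (F * B) * R ≤ (A + B) * (M / R ^ 2 + F * R ^ 2) := by
    have a1 : 0 ≤ B * (M / R ^ 2) := by positivity
    have a2 : 0 ≤ A * (F * R ^ 2) := by positivity
    have a3 : M * A / R ^ 2 = A * (M / R ^ 2) := by ring
    rw [a3]; nlinarith
  rw [div_mul_eq_mul_div, le_div_iff₀ hI]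
  linarith

end keyest

section cmp
variable {n : ℕ}

lemma key_local (n : ℕ) : ∃ C : ℝ, 0 ≤ C ∧ ∀ (u : EuclideanSpace ℝ (Fin n) → ℝ)
    (x0 : EuclideanSpace ℝ (Fin n)) (R M F : ℝ), 0 < R → ContDiffOn ℝ 4 u (ball x0 (2 * R)) →
    (∀ y ∈ closedBall x0 R, |u y| ≤ M) → (∀ y ∈ closedBall x0 R, lap (lap u) y ≤ F) → 0 ≤ F →
    - lap u x0 ≤ C * (M / R ^ 2 + F * R ^ 2) := by
  obtain ⟨C, hC, h⟩ := key_global n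
  refine ⟨C, hC, fun u x0 R M F hR hu hM hF hF0 => ?_⟩
  let χ : ContDiffBump x0 := ⟨5/4 * R, 3/2 * R, by linarith, by linarith⟩
  have hχ1 : ∀ y ∈ ball x0 (5/4 * R), χ y = 1 := fun y hy =>
    χ.one_of_mem_closedBall (ball_subset_closedBall hy)
  have hw : ContDiff ℝ 4 (fun y => χ y * u y) := by
    rw [contDiff_iff_contDiffAt]
    intro y
    rcases lt_or_ge (dist y x0) (2 * R) with hy | hy
    · exact χ.contDiff.contDiffAt.mul (hu.contDiffAt (isOpen_ball.mem_nhds hy))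
    · have : (fun y => χ y * u y) =ᶠ[𝓝 y] fun _ => 0 := by
        have ho : IsOpen {z : EuclideanSpace ℝ (Fin n) | 3/2 * R < dist z x0} :=
          isOpen_lt continuous_const (by fun_prop)
        filter_upwards [ho.mem_nhds (show 3/2 * R < dist y x0 by linarith)] with z hz
        rw [χ.zero_of_le_dist (le_of_lt hz), zero_mul]
      exact contDiffAt_const.congr_of_eventuallyEq this
  have heq : ∀ y ∈ ball x0 (5/4 * R), (fun y => χ y * u y) =ᶠ[𝓝 y] u := by
    intro y hy
    filter_upwards [isOpen_ball.mem_nhds hy] with z hz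
    rw [hχ1 z hz, one_mul]
  have hlap : ∀ y ∈ ball x0 (5/4 * R), lap (fun y => χ y * u y) y = lap u y :=
    fun y hy => lap_congr (heq y hy)
  have hlap2 : ∀ y ∈ ball x0 (5/4 * R), lap (lap (fun y => χ y * u y)) y = lap (lap u) y := by
    intro y hy
    apply lap_congr
    filter_upwards [isOpen_ball.mem_nhds hy] with z hz using hlap z hz
  have hsub : closedBall x0 R ⊆ ball x0 (5/4 * R) := closedBall_subset_ball (by linarith)
  have := h (fun y => χ y * u y) x0 R M F hw hR
    (fun y hy => by simp only [hχ1 y (hsub hy), one_mul]; exact hM y hy)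
    (fun y hy => by rw [hlap2 y (hsub hy)]; exact hF y hy) hF0
  rwa [hlap x0 (mem_ball_self (by linarith))] at this

lemma small_pow {c d C κ : ℝ} (hcd : c < d) (hκ : 0 < κ) :
    ∃ ρ > 0, ∀ t : ℝ, 0 < t → t < ρ → C * t ^ (-c) ≤ κ * t ^ (-d) := by
  have h1 : Tendsto (fun t : ℝ => C * t ^ (d - c)) (𝓝 0) (𝓝 0) := by
    have h := (Real.continuousAt_rpow_const 0 (d - c) (Or.inr (by linarith))).tendsto
    rw [Real.zero_rpow (by linarith)] at h
    simpa using h.const_mul C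
  have h2 : ∀ᶠ t in 𝓝 (0:ℝ), C * t ^ (d - c) < κ := h1.eventually (gt_mem_nhds hκ)
  obtain ⟨ρ, hρ, h⟩ := Metric.eventually_nhds_iff.1 h2
  refine ⟨ρ, hρ, fun t ht htρ => ?_⟩
  have h3 := h (y := t) (by simp [abs_of_pos ht, htρ])
  have e : t ^ (-c) = t ^ (d - c) * t ^ (-d) := by
    rw [← Real.rpow_add ht]; congr 1; ring
  rw [e, ← mul_assoc]
  have := Real.rpow_pos_of_pos ht (-d)
  gcongr

lemma le_of_forall_add_mul {x y z : ℝ} (hz : 0 < z) (h : ∀ κ > 0, x ≤ y + κ * z) : x ≤ y := by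
  refine le_of_forall_pos_le_add fun ε hε => ?_
  have := h (ε / z) (by positivity)
  rwa [div_mul_cancel₀ _ hz.ne'] at this

/-- growth of `-Δu` -/
lemma growth {u : EuclideanSpace ℝ (Fin n) → ℝ} {γ C0 C1 r : ℝ} (hγ : 0 ≤ γ)
    (hr : 0 < r) (hr1 : r ≤ 1)
    (hC0 : 0 ≤ C0) (hC1 : 0 ≤ C1)
    (hu : ContDiffOn ℝ 4 u (ball 0 1 \ {0}))
    (h0 : ∀ x, x ≠ 0 → ‖x‖ < r → |u x| ≤ C0 * ‖x‖ ^ (-γ))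
    (h1 : ∀ x, x ≠ 0 → ‖x‖ < r → lap (lap u) x ≤ C1 * ‖x‖ ^ (-γ - 4)) :
    ∃ C, ∀ x, x ≠ 0 → ‖x‖ < r / 2 → - lap u x ≤ C * ‖x‖ ^ (-γ - 2) := by
  obtain ⟨C, hC, h⟩ := key_local n
  refine ⟨C * (C0 + C1) * 2 ^ (γ + 2), fun x hx hxr => ?_⟩
  have hpos : 0 < ‖x‖ := norm_pos_iff.2 hx
  set ρ := ‖x‖ / 2 with hρ
  have hρ0 : 0 < ρ := by positivity
  have hnorm : ∀ y ∈ ball x (2 * ρ), y ≠ 0 ∧ ‖y‖ < 2 * ‖x‖ := by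
    intro y hy
    rw [mem_ball, dist_eq_norm] at hy
    constructor
    · rintro rfl
      simp at hy; linarith
    · have := norm_le_norm_add_norm_sub' y x
      have h3 : ‖x‖ + ‖y - x‖ < 2 * ‖x‖ := by linarith
      linarith
  have hlow : ∀ y ∈ closedBall x ρ, ρ ≤ ‖y‖ ∧ y ≠ 0 ∧ ‖y‖ < r := by
    intro y hy
    have hy' : y ∈ ball x (2 * ρ) := closedBall_subset_ball (by linarith) hy
    have h2 := hnorm y hy'
    rw [mem_closedBall, dist_eq_norm] at hy
    have := norm_le_norm_add_norm_sub y x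
    exact ⟨by linarith, h2.1, by linarith [h2.2]⟩
  have := h u x ρ (C0 * ρ ^ (-γ)) (C1 * ρ ^ (-γ - 4)) hρ0
    (hu.mono fun y hy => ⟨by rw [mem_ball_zero_iff]; linarith [(hnorm y hy).2], (hnorm y hy).1⟩)
    (fun y hy => (h0 y (hlow y hy).2.1 (hlow y hy).2.2).trans (by
      have := Real.rpow_le_rpow_of_nonpos hρ0 (hlow y hy).1 (by linarith : -γ ≤ 0)
      gcongr))
    (fun y hy => (h1 y (hlow y hy).2.1 (hlow y hy).2.2).trans (by
      have := Real.rpow_le_rpow_of_nonpos hρ0 (hlow y hy).1 (by linarith : -γ - 4 ≤ 0)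
      gcongr)) (by positivity)
  refine this.trans (le_of_eq ?_)
  have e1 : ρ ^ (-γ) = ρ ^ (-γ - 2) * ρ ^ 2 := by
    rw [← Real.rpow_natCast, ← Real.rpow_add hρ0]; congr 1; push_cast; ring
  have e2 : ρ ^ (-γ - 4) * ρ ^ 2 = ρ ^ (-γ - 2) := by
    rw [← Real.rpow_natCast, ← Real.rpow_add hρ0]; congr 1; push_cast; ring
  have e3 : ρ ^ (-γ - 2) = 2 ^ (γ + 2) * ‖x‖ ^ (-γ - 2) := by
    rw [hρ, Real.div_rpow hpos.le (by norm_num), div_eq_mul_inv, ← Real.rpow_neg (by norm_num)]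
    rw [mul_comm]; congr 2; ring
  rw [mul_assoc C1, e2, e1, ← mul_assoc C0, mul_div_assoc, div_self (by positivity), e3]
  ring

lemma isCompact_annulus (ρ r : ℝ) :
    IsCompact {x : EuclideanSpace ℝ (Fin n) | ρ ≤ ‖x‖ ∧ ‖x‖ ≤ r} := by
  have : {x : EuclideanSpace ℝ (Fin n) | ρ ≤ ‖x‖ ∧ ‖x‖ ≤ r} =
      closedBall 0 r ∩ {x | ρ ≤ ‖x‖} := by
    ext x; simp [and_comm]
  rw [this]
  exact (isCompact_closedBall _ _).inter_right (isClosed_le continuous_const continuous_norm)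

/-- scalar comparison principle on a punctured ball -/
lemma scalar_cmp {w W : EuclideanSpace ℝ (Fin n) → ℝ} {r ρ : ℝ} (hρ : 0 < ρ)
    (hw : ∀ x, x ≠ 0 → ‖x‖ ≤ r → ContDiffAt ℝ 2 w x)
    (hW : ∀ x, x ≠ 0 → ‖x‖ ≤ r → ContDiffAt ℝ 2 W x)
    (hlap : ∀ x, x ≠ 0 → ‖x‖ < r → lap W x < lap w x)
    (hbd : ∀ x, x ≠ 0 → ‖x‖ = r → w x ≤ W x)
    (hnear : ∀ x, x ≠ 0 → ‖x‖ < ρ → ‖x‖ ≤ r → w x ≤ W x) :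
    ∀ x, x ≠ 0 → ‖x‖ ≤ r → w x ≤ W x := by
  intro x1 hx1 hx1r
  by_contra hcon
  push Not at hcon
  have hK := isCompact_annulus (n := n) ρ r
  have hne : ∀ x : EuclideanSpace ℝ (Fin n), ρ ≤ ‖x‖ → x ≠ 0 := by
    rintro x hx rfl; simp at hx; linarith
  have hx1ρ : ρ ≤ ‖x1‖ := by
    by_contra hlt
    push Not at hlt
    linarith [hnear x1 hx1 hlt hx1r]
  obtain ⟨x2, hx2, hmax⟩ := hK.exists_isMaxOn (f := fun x => w x - W x) ⟨x1, hx1ρ, hx1r⟩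
    (fun x hx => ((hw x (hne x hx.1) hx.2).sub (hW x (hne x hx.1)
      hx.2)).continuousAt.continuousWithinAt)
  have hpos : 0 < w x2 - W x2 := by
    have := hmax (a := x1) ⟨hx1ρ, hx1r⟩
    have this : w x1 - W x1 ≤ w x2 - W x2 := this
    linarith
  have h20 := hne x2 hx2.1
  have h2r : ‖x2‖ < r := lt_of_le_of_ne hx2.2 fun h => by linarith [hbd x2 h20 h]
  have hloc : IsLocalMax (fun x => w x - W x) x2 := by
    filter_upwards [isOpen_ne.mem_nhds h20,
      (isOpen_lt continuous_norm continuous_const).mem_nhds h2r] with x hx0 hxr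
    have hxr : ‖x‖ < r := hxr
    rcases le_or_gt ρ ‖x‖ with h | h
    · exact hmax (a := x) ⟨h, hxr.le⟩
    · linarith [hnear x hx0 h hxr.le]
  have h1 := hw x2 h20 hx2.2
  have h2 := hW x2 h20 hx2.2
  have := lap_nonpos_of_isLocalMax (h1.sub h2) hloc
  rw [lap_sub h1 h2] at this
  linarith [hlap x2 h20 h2r]

/-- comparison principle for the cooperative system on a punctured ball -/
lemma system_cmp {u v φ ψ e : EuclideanSpace ℝ (Fin n) → ℝ} {r ρ : ℝ} (hρ : 0 < ρ)
    (hu : ∀ x, x ≠ 0 → ‖x‖ ≤ r → ContDiffAt ℝ 2 u x)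
    (hv : ∀ x, x ≠ 0 → ‖x‖ ≤ r → ContDiffAt ℝ 2 v x)
    (hφ : ∀ x, x ≠ 0 → ‖x‖ ≤ r → ContDiffAt ℝ 2 φ x)
    (hψ : ∀ x, x ≠ 0 → ‖x‖ ≤ r → ContDiffAt ℝ 2 ψ x)
    (hφ0 : ∀ x, x ≠ 0 → 0 < φ x) (hψ0 : ∀ x, x ≠ 0 → 0 < ψ x)
    (he : ∀ x, x ≠ 0 → ‖x‖ < r → 0 ≤ e x)
    (huv : ∀ x, x ≠ 0 → ‖x‖ < r → - lap u x = v x)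
    (hvu : ∀ x, x ≠ 0 → ‖x‖ < r → - lap v x ≤ e x * u x)
    (hφψ : ∀ x, x ≠ 0 → ‖x‖ < r → ψ x < - lap φ x)
    (hψφ : ∀ x, x ≠ 0 → ‖x‖ < r → e x * φ x < - lap ψ x)
    (hbd : ∀ x, x ≠ 0 → ‖x‖ = r → u x ≤ φ x ∧ v x ≤ ψ x)
    (hnear : ∀ x, x ≠ 0 → ‖x‖ < ρ → ‖x‖ ≤ r → u x ≤ φ x ∧ v x ≤ ψ x) :
    ∀ x, x ≠ 0 → ‖x‖ ≤ r → u x ≤ φ x ∧ v x ≤ ψ x := by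
  set q : EuclideanSpace ℝ (Fin n) → ℝ := fun x => max (u x / φ x) (v x / ψ x) with hq
  have hq1 : ∀ x, x ≠ 0 → ((u x ≤ φ x ∧ v x ≤ ψ x) ↔ q x ≤ 1) := by
    intro x hx
    rw [hq]; simp only [max_le_iff]
    rw [div_le_one (hφ0 x hx), div_le_one (hψ0 x hx)]
  intro x1 hx1 hx1r
  by_contra hcon
  rw [hq1 x1 hx1, not_le] at hcon
  have hK := isCompact_annulus (n := n) ρ r
  have hne : ∀ x : EuclideanSpace ℝ (Fin n), ρ ≤ ‖x‖ → x ≠ 0 := by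
    rintro x hx rfl; simp at hx; linarith
  have hx1ρ : ρ ≤ ‖x1‖ := by
    by_contra hlt
    push Not at hlt
    linarith [(hq1 x1 hx1).1 (hnear x1 hx1 hlt hx1r)]
  obtain ⟨x2, hx2, hmax⟩ := hK.exists_isMaxOn (f := q) ⟨x1, hx1ρ, hx1r⟩
    (fun x hx => by
      have h0 := hne x hx.1
      have c1 : ContinuousAt (fun x => u x / φ x) x :=
        (hu x h0 hx.2).continuousAt.div (hφ x h0 hx.2).continuousAt (hφ0 x h0).ne'
      have c2 : ContinuousAt (fun x => v x / ψ x) x :=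
        (hv x h0 hx.2).continuousAt.div (hψ x h0 hx.2).continuousAt (hψ0 x h0).ne'
      have c3 : ContinuousAt q x := Filter.Tendsto.max c1 c2
      exact c3.continuousWithinAt)
  set θ := q x2 with hθ
  have hθ1 : 1 < θ := lt_of_lt_of_le hcon (hmax (a := x1) ⟨hx1ρ, hx1r⟩)
  have h20 := hne x2 hx2.1
  have h2r : ‖x2‖ < r := lt_of_le_of_ne hx2.2 fun h => by
    linarith [(hq1 x2 h20).1 (hbd x2 h20 h)]
  have hall : ∀ x, x ≠ 0 → ‖x‖ ≤ r → u x ≤ θ * φ x ∧ v x ≤ θ * ψ x := by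
    intro x hx0 hxr
    have : q x ≤ θ := by
      rcases le_or_gt ρ ‖x‖ with h | h
      · exact hmax (a := x) ⟨h, hxr⟩
      · linarith [(hq1 x hx0).1 (hnear x hx0 h hxr)]
    rw [← div_le_iff₀ (hφ0 x hx0), ← div_le_iff₀ (hψ0 x hx0)]
    exact max_le_iff.1 this
  have hnb : ∀ᶠ x in 𝓝 x2, x ≠ 0 ∧ ‖x‖ ≤ r := by
    filter_upwards [isOpen_ne.mem_nhds h20,
      (isOpen_lt continuous_norm continuous_const).mem_nhds h2r] with x hx0 hxr
    exact ⟨hx0, le_of_lt hxr⟩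
  have hu2 := hu x2 h20 hx2.2
  have hv2 := hv x2 h20 hx2.2
  have hφ2 := hφ x2 h20 hx2.2
  have hψ2 := hψ x2 h20 hx2.2
  rcases le_total (v x2 / ψ x2) (u x2 / φ x2) with hc | hc
  · have hEq : u x2 = θ * φ x2 := by
      have : θ = u x2 / φ x2 := max_eq_left hc
      rw [this, div_mul_cancel₀ _ (hφ0 x2 h20).ne']
    have hloc : IsLocalMax (fun x => u x - θ * φ x) x2 := by
      filter_upwards [hnb] with x hx
      linarith [(hall x hx.1 hx.2).1]
    have := lap_nonpos_of_isLocalMax (hu2.sub (contDiffAt_const.mul hφ2)) hloc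
    rw [lap_sub hu2 (contDiffAt_const.mul hφ2), lap_const_mul _ hφ2] at this
    have h1 := huv x2 h20 h2r
    have h2 := hφψ x2 h20 h2r
    have h3 := (hall x2 h20 hx2.2).2
    nlinarith
  · have hEq : v x2 = θ * ψ x2 := by
      have : θ = v x2 / ψ x2 := max_eq_right hc
      rw [this, div_mul_cancel₀ _ (hψ0 x2 h20).ne']
    have hloc : IsLocalMax (fun x => v x - θ * ψ x) x2 := by
      filter_upwards [hnb] with x hx
      linarith [(hall x hx.1 hx.2).2]
    have := lap_nonpos_of_isLocalMax (hv2.sub (contDiffAt_const.mul hψ2)) hloc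
    rw [lap_sub hv2 (contDiffAt_const.mul hψ2), lap_const_mul _ hψ2] at this
    have h1 := hvu x2 h20 h2r
    have h2 := hψφ x2 h20 h2r
    have h3 := mul_le_mul_of_nonneg_left (hall x2 h20 hx2.2).1 (he x2 h20 h2r)
    nlinarith

end cmp

section decay
variable {n : ℕ}

lemma contDiffAt_two_pow (A a κ b : ℝ) {x : EuclideanSpace ℝ (Fin n)} (hx : x ≠ 0) :
    ContDiffAt ℝ 2 (fun y => A * ‖y‖ ^ a + κ * ‖y‖ ^ b) x :=
  (contDiffAt_const.mul (contDiffAt_norm_rpow a hx)).add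
    (contDiffAt_const.mul (contDiffAt_norm_rpow b hx))

lemma lap_two_pow (A a κ b : ℝ) {x : EuclideanSpace ℝ (Fin n)} (hx : x ≠ 0) :
    lap (fun y => A * ‖y‖ ^ a + κ * ‖y‖ ^ b) x =
      A * (a * (a + n - 2) * ‖x‖ ^ (a - 2)) + κ * (b * (b + n - 2) * ‖x‖ ^ (b - 2)) := by
  rw [lap_add (contDiffAt_const.mul (contDiffAt_norm_rpow a hx))
    (contDiffAt_const.mul (contDiffAt_norm_rpow b hx)),
    lap_const_mul _ (contDiffAt_norm_rpow a hx), lap_const_mul _ (contDiffAt_norm_rpow b hx),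
    lap_norm_rpow _ hx, lap_norm_rpow _ hx]

lemma isOpen_punct : IsOpen (ball (0 : EuclideanSpace ℝ (Fin n)) 1 \ {0}) :=
  isOpen_ball.sdiff isClosed_singleton

lemma mem_punct {x : EuclideanSpace ℝ (Fin n)} (h0 : x ≠ 0) (h1 : ‖x‖ < 1) :
    x ∈ ball (0 : EuclideanSpace ℝ (Fin n)) 1 \ {0} := ⟨by simpa using h1, by simpa using h0⟩

lemma sphere_bound {w : EuclideanSpace ℝ (Fin n) → ℝ} {r : ℝ} (hr : 0 < r)
    (hw : ∀ x, x ≠ 0 → ‖x‖ ≤ r → ContDiffAt ℝ 2 w x) :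
    ∃ M, 0 ≤ M ∧ ∀ x, ‖x‖ = r → w x ≤ M := by
  have hK := isCompact_annulus (n := n) r r
  have hne : ∀ x : EuclideanSpace ℝ (Fin n), r ≤ ‖x‖ → x ≠ 0 := by
    rintro x hx rfl; simp at hx; linarith
  obtain ⟨M, hM⟩ := hK.bddAbove_image (f := w)
    (fun x hx => (hw x (hne x hx.1) hx.2).continuousAt.continuousWithinAt)
  exact ⟨max M 0, le_max_right _ _, fun x hx =>
    (hM ⟨x, ⟨hx.ge, hx.le⟩, rfl⟩).trans (le_max_left _ _)⟩

lemma decay (hn : 5 ≤ n) {u V : EuclideanSpace ℝ (Fin n) → ℝ} {γ a C0 ρ0 : ℝ}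
    (ha : 0 < a) (haγ : a < γ) (hγn : γ < n - 4)
    (hu : ContDiffOn ℝ 4 u (ball 0 1 \ {0}))
    (hu0 : ∀ x, x ≠ 0 → ‖x‖ < 1 → 0 ≤ u x)
    (hpde : ∀ x, x ≠ 0 → ‖x‖ < 1 → lap (lap u) x = V x * u x)
    (hV : ∀ ε > 0, ∃ ρ > 0, ∀ x, x ≠ 0 → ‖x‖ < ρ → V x ≤ ε * ‖x‖ ^ (-4 : ℝ))
    (hρ0 : 0 < ρ0) (hC0 : 0 ≤ C0) (hgr : ∀ x, x ≠ 0 → ‖x‖ < ρ0 → u x ≤ C0 * ‖x‖ ^ (-γ)) :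
    ∃ r A, 0 < r ∧ r < 1 ∧ 0 ≤ A ∧ ∀ x, x ≠ 0 → ‖x‖ ≤ r →
      u x ≤ A * ‖x‖ ^ (-a) ∧ - lap u x ≤ A * ‖x‖ ^ (-a - 2) := by
  have hn' : (5 : ℝ) ≤ n := by exact_mod_cast hn
  obtain ⟨b, hb1, hb2⟩ := exists_between hγn
  set la := a * (n - 2 - a) with hla
  set lb := b * (n - 2 - b) with hlb
  set ma := (a + 2) * (n - 4 - a) with hma
  set mb := (b + 2) * (n - 4 - b) with hmb
  have hla0 : 0 < la := mul_pos ha (by linarith)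
  have hlb0 : 0 < lb := mul_pos (by linarith) (by linarith)
  have hma0 : 0 < ma := mul_pos (by linarith) (by linarith)
  have hmb0 : 0 < mb := mul_pos (by linarith) (by linarith)
  set ε := min (la * ma) (lb * mb) / 4 with hε
  have hε0 : 0 < ε := div_pos (lt_min (mul_pos hla0 hma0) (mul_pos hlb0 hmb0)) (by norm_num)
  have hεa : 4 * ε ≤ la * ma := by rw [hε]; linarith [min_le_left (la * ma) (lb * mb)]
  have hεb : 4 * ε ≤ lb * mb := by rw [hε]; linarith [min_le_right (la * ma) (lb * mb)]
  obtain ⟨ρ1, hρ1, hV1⟩ := hV ε hε0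
  set r := min (min ρ0 ρ1) 1 with hr
  have hr0 : 0 < r := lt_min (lt_min hρ0 hρ1) one_pos
  have hr_1 : r ≤ 1 := min_le_right _ _
  have hrρ0 : r ≤ ρ0 := (min_le_left _ _).trans (min_le_left _ _)
  have hrρ1 : r ≤ ρ1 := (min_le_left _ _).trans (min_le_right _ _)
  obtain ⟨C, hC⟩ := growth (by linarith : 0 ≤ γ) hr0 hr_1 hC0 (mul_nonneg hε0.le hC0) hu
    (fun x hx hxr => by
      rw [abs_of_nonneg (hu0 x hx (by linarith))]; exact hgr x hx (by linarith))
    (fun x hx hxr => by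
      rw [hpde x hx (by linarith)]
      have h1 := hV1 x hx (by linarith)
      have h2 := hgr x hx (by linarith)
      have hp := norm_pos_iff.2 hx
      have h3 := hu0 x hx (by linarith)
      calc V x * u x ≤ (ε * ‖x‖ ^ (-4 : ℝ)) * (C0 * ‖x‖ ^ (-γ)) :=
            mul_le_mul h1 h2 h3 (by positivity)
        _ = ε * C0 * (‖x‖ ^ (-γ) * ‖x‖ ^ (-4 : ℝ)) := by ring
        _ = _ := by rw [← Real.rpow_add hp]; congr 2)
  set R := r / 4 with hR
  have hR0 : 0 < R := by positivity
  have hRr : R < r / 2 := by rw [hR]; linarith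
  have hcu : ∀ x, x ≠ 0 → ‖x‖ ≤ R → ContDiffAt ℝ 2 u x := fun x hx hxr =>
    (hu.contDiffAt (isOpen_punct.mem_nhds (mem_punct hx (by linarith)))).of_le (by norm_num)
  have hcl : ∀ x, x ≠ 0 → ‖x‖ ≤ R → ContDiffAt ℝ 2 (lap u) x := fun x hx hxr =>
    (contDiffOn_lap isOpen_punct hu).contDiffAt (isOpen_punct.mem_nhds (mem_punct hx (by linarith)))
  have hcv : ∀ x, x ≠ 0 → ‖x‖ ≤ R → ContDiffAt ℝ 2 (fun x => - lap u x) x := fun x hx hxr =>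
    (hcl x hx hxr).neg
  obtain ⟨M1, hM10, hM1⟩ := sphere_bound hR0 hcu
  obtain ⟨M2, hM20, hM2⟩ := sphere_bound hR0 hcv
  set A := (M1 + 1) * R ^ a + (M2 + 1) * (2 / la) * R ^ (a + 2) with hA
  have hA0 : 0 < A := by positivity
  have hA1 : M1 ≤ A * R ^ (-a) := by
    have e1 : R ^ a * R ^ (-a) = 1 := by rw [← Real.rpow_add hR0]; simp
    have : 0 ≤ (M2 + 1) * (2 / la) * R ^ (a + 2) * R ^ (-a) := by positivity
    rw [hA, add_mul, mul_assoc (M1 + 1), e1]; linarith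
  have hA2 : M2 ≤ A * (la / 2) * R ^ (-a - 2) := by
    have e1 : R ^ (a + 2) * R ^ (-a - 2) = 1 := by
      rw [← Real.rpow_add hR0]; ring_nf; simp
    have : 0 ≤ (M1 + 1) * R ^ a * (la / 2) * R ^ (-a - 2) := by positivity
    have e2 : (M2 + 1) * (2 / la) * R ^ (a + 2) * (la / 2) * R ^ (-a - 2) = M2 + 1 := by
      have : (M2 + 1) * (2 / la) * R ^ (a + 2) * (la / 2) * R ^ (-a - 2)
        = (M2 + 1) * ((2 / la) * (la / 2)) * (R ^ (a + 2) * R ^ (-a - 2)) := by ring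
      rw [this, e1]; field_simp
    have e3 : A * (la / 2) * R ^ (-a - 2) = (M1 + 1) * R ^ a * (la / 2) * R ^ (-a - 2) +
      (M2 + 1) * (2 / la) * R ^ (a + 2) * (la / 2) * R ^ (-a - 2) := by rw [hA]; ring
    rw [e3, e2]; linarith
  have main : ∀ κ > 0, ∀ x, x ≠ 0 → ‖x‖ ≤ R → u x ≤ A * ‖x‖ ^ (-a) + κ * ‖x‖ ^ (-b) ∧
      - lap u x ≤ A * (la / 2) * ‖x‖ ^ (-a - 2) + κ * (lb / 2) * ‖x‖ ^ (-b - 2) := by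
    intro κ hκ
    obtain ⟨σ1, hσ1, hs1⟩ := small_pow (C := C0) hb1 hκ
    obtain ⟨σ2, hσ2, hs2⟩ := small_pow (c := γ + 2) (d := b + 2) (C := C) (κ := κ * (lb / 2))
      (by linarith) (by positivity)
    refine system_cmp (e := fun x => ε * ‖x‖ ^ (-4 : ℝ)) (ρ := min σ1 σ2) (lt_min hσ1 hσ2)
      hcu hcv (fun x hx _ => contDiffAt_two_pow _ _ _ _ hx)
      (fun x hx _ => contDiffAt_two_pow _ _ _ _ hx) ?_ ?_ ?_ ?_ ?_ ?_ ?_ ?_ ?_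
    · intro x hx
      have hp := norm_pos_iff.2 hx
      positivity
    · intro x hx
      have hp := norm_pos_iff.2 hx
      positivity
    · intro x hx _
      positivity
    · intro x hx _; rfl
    · intro x hx hxR
      rw [lap_neg (hcl x hx hxR.le), neg_neg, hpde x hx (by linarith)]
      exact mul_le_mul_of_nonneg_right (hV1 x hx (by linarith)) (hu0 x hx (by linarith))
    · intro x hx hxR
      have hp := norm_pos_iff.2 hx
      rw [lap_two_pow _ _ _ _ hx]
      have h1 : 0 < A * (la / 2) * ‖x‖ ^ (-a - 2) := by positivity
      have h2 : 0 < κ * (lb / 2) * ‖x‖ ^ (-b - 2) := by positivity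
      have : -(A * (-a * (-a + n - 2) * ‖x‖ ^ (-a - 2)) +
        κ * (-b * (-b + n - 2) * ‖x‖ ^ (-b - 2))) =
        2 * (A * (la / 2) * ‖x‖ ^ (-a - 2)) + 2 * (κ * (lb / 2) * ‖x‖ ^ (-b - 2)) := by
        rw [hla, hlb]; ring
      rw [this]; linarith
    · intro x hx hxR
      have hp := norm_pos_iff.2 hx
      rw [lap_two_pow _ _ _ _ hx]
      have e1 : ‖x‖ ^ (-4 : ℝ) * ‖x‖ ^ (-a) = ‖x‖ ^ (-a - 2 - 2) := by
        rw [← Real.rpow_add hp]; congr 1; ring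
      have e2 : ‖x‖ ^ (-4 : ℝ) * ‖x‖ ^ (-b) = ‖x‖ ^ (-b - 2 - 2) := by
        rw [← Real.rpow_add hp]; congr 1; ring
      set X := ‖x‖ ^ (-a - 2 - 2) with hX
      set Y := ‖x‖ ^ (-b - 2 - 2) with hY
      have hX0 : 0 < A * X := by positivity
      have hY0 : 0 < κ * Y := by positivity
      have l1 : ε * ‖x‖ ^ (-4 : ℝ) * (A * ‖x‖ ^ (-a) + κ * ‖x‖ ^ (-b)) =
          ε * (A * X) + ε * (κ * Y) := by rw [← e1, ← e2]; ring
      have l2 : -(A * (la / 2) * ((-a - 2) * (-a - 2 + n - 2) * X) +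
          κ * (lb / 2) * ((-b - 2) * (-b - 2 + n - 2) * Y)) =
          (la * ma) / 2 * (A * X) + (lb * mb) / 2 * (κ * Y) := by
        rw [hma, hmb]; ring
      rw [l1, l2]
      have := mul_lt_mul_of_pos_right (show ε < (la * ma) / 2 by linarith) hX0
      have := mul_lt_mul_of_pos_right (show ε < (lb * mb) / 2 by linarith) hY0
      linarith
    · intro x hx hxR
      have hp := norm_pos_iff.2 hx
      have h1 := hM1 x hxR
      have h2 := hM2 x hxR
      have h3 : 0 < κ * ‖x‖ ^ (-b) := by positivity
      have h4 : 0 < κ * (lb / 2) * ‖x‖ ^ (-b - 2) := by positivity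
      rw [← hxR] at hA1 hA2
      exact ⟨by linarith, by linarith⟩
    · intro x hx hxσ hxR
      have hp := norm_pos_iff.2 hx
      have h1 := hgr x hx (by linarith)
      have h2 := hC x hx (by linarith)
      have h3 := hs1 _ hp (hxσ.trans_le (min_le_left _ _))
      have h4 := hs2 _ hp (hxσ.trans_le (min_le_right _ _))
      rw [neg_add', neg_add'] at h4
      have h5 : 0 < A * ‖x‖ ^ (-a) := by positivity
      have h6 : 0 < A * (la / 2) * ‖x‖ ^ (-a - 2) := by positivity
      exact ⟨by linarith, by linarith⟩
  refine ⟨R, A * (1 + la / 2), hR0, by linarith, by positivity, fun x hx hxR => ?_⟩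
  have hp := norm_pos_iff.2 hx
  constructor
  · have := le_of_forall_add_mul (z := ‖x‖ ^ (-b)) (by positivity) (fun κ hκ => (main κ hκ x hx hxR).1)
    have h5 : 0 ≤ A * (la / 2) * ‖x‖ ^ (-a) := by positivity
    linarith
  · have := le_of_forall_add_mul (z := (lb / 2) * ‖x‖ ^ (-b - 2)) (by positivity)
      (fun κ hκ => ((main κ hκ x hx hxR).2).trans_eq (by rw [mul_assoc κ]))
    have h5 : 0 ≤ A * ‖x‖ ^ (-a - 2) := by positivity
    linarith

/-- a subsolution with mild growth is bounded above -/
lemma bdd_above (hn : 5 ≤ n) {w : EuclideanSpace ℝ (Fin n) → ℝ} {r c C : ℝ} (hr : 0 < r)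
    (hc : c < 5 / 2) (hC : 0 ≤ C)
    (hw : ∀ x, x ≠ 0 → ‖x‖ ≤ r → ContDiffAt ℝ 2 w x)
    (hgr : ∀ x, x ≠ 0 → ‖x‖ ≤ r → w x ≤ C * ‖x‖ ^ (-c))
    (hlap : ∀ x, x ≠ 0 → ‖x‖ ≤ r → - lap w x ≤ C * ‖x‖ ^ (-1 : ℝ)) :
    ∃ M, 0 ≤ M ∧ ∀ x, x ≠ 0 → ‖x‖ ≤ r → w x ≤ M := by
  have hn' : (5 : ℝ) ≤ n := by exact_mod_cast hn
  obtain ⟨M, hM0, hM⟩ := sphere_bound hr hw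
  refine ⟨M + (C + 1) * r, by positivity, fun x hx hxr => ?_⟩
  have hp := norm_pos_iff.2 hx
  have main : ∀ κ > 0, w x ≤ M + (C + 1) * r + κ * ‖x‖ ^ (-(5/2) : ℝ) := by
    intro κ hκ
    obtain ⟨σ, hσ, hs⟩ := small_pow (C := C) hc hκ
    have hWc : ∀ x : EuclideanSpace ℝ (Fin n), x ≠ 0 → ContDiffAt ℝ 2 (fun y =>
      (M + (C + 1) * r) + (-(C + 1) * ‖y‖ ^ (1 : ℝ) + κ * ‖y‖ ^ (-(5/2) : ℝ))) x :=
      fun x hx => contDiffAt_const.add (contDiffAt_two_pow _ _ _ _ hx)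
    have := scalar_cmp (w := w) (W := fun y =>
      (M + (C + 1) * r) + (-(C + 1) * ‖y‖ ^ (1 : ℝ) + κ * ‖y‖ ^ (-(5/2) : ℝ))) (r := r) hσ hw
      (fun x hx _ => hWc x hx) ?_ ?_ ?_ x hx hxr
    · rw [Real.rpow_one] at this
      have : 0 ≤ (C + 1) * ‖x‖ := by positivity
      linarith
    · intro x hx hxr
      have hp := norm_pos_iff.2 hx
      rw [lap_add contDiffAt_const (contDiffAt_two_pow _ _ _ _ hx), lap_two_pow _ _ _ _ hx,
        lap_const]
      have h1 := hlap x hx hxr.le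
      have e1 : (1 - 2 : ℝ) = -1 := by norm_num
      rw [e1]
      have h2 : 0 < ‖x‖ ^ (-1 : ℝ) := by positivity
      have h3 : 0 < κ * ‖x‖ ^ (-(5/2) - 2 : ℝ) := by positivity
      have h4 : κ * (-(5/2) * (-(5/2) + n - 2) * ‖x‖ ^ (-(5/2) - 2 : ℝ)) ≤ 0 := by
        have : 0 ≤ (5/2) * (-(5/2) + (n:ℝ) - 2) := by nlinarith
        nlinarith
      have h5 : (C + 1) * ‖x‖ ^ (-1 : ℝ) ≤ (C + 1) * (n - 1) * ‖x‖ ^ (-1 : ℝ) := by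
        apply mul_le_mul_of_nonneg_right _ h2.le
        nlinarith
      nlinarith
    · intro x hx hxr
      have hp := norm_pos_iff.2 hx
      have h3 : 0 < κ * ‖x‖ ^ (-(5/2) : ℝ) := by positivity
      have := hM x hxr
      simp only [Real.rpow_one]
      rw [hxr] at h3 ⊢
      linarith
    · intro x hx hxσ hxr
      have hp := norm_pos_iff.2 hx
      have h1 := hgr x hx hxr
      have h2 := hs _ hp hxσ
      have h3 : (C + 1) * ‖x‖ ≤ (C + 1) * r := by gcongr
      simp only [Real.rpow_one]
      linarith
  exact le_of_forall_add_mul (by positivity) main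

end decay

section doubling
variable {n : ℕ}

lemma doubling_max {G H : EuclideanSpace ℝ (Fin n) → ℝ} {x y : EuclideanSpace ℝ (Fin n)}
    {K L : ℝ} (hG : ContDiffAt ℝ 2 G x) (hH : ContDiffAt ℝ 2 H y) (hxy : x ≠ y)
    (hmax : IsLocalMax (fun z : EuclideanSpace ℝ (Fin n) × EuclideanSpace ℝ (Fin n) =>
      G z.1 + H z.2 - (K * ‖z.1 - z.2‖ - L * ‖z.1 - z.2‖ ^ 2)) (x, y)) :
    lap G x + lap H y ≤ - 8 * L := by
  set d := x - y with hd
  have hd0 : d ≠ 0 := sub_ne_zero.2 hxy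
  have hdp : 0 < ‖d‖ := norm_pos_iff.2 hd0
  set e := ‖d‖⁻¹ • d with he
  have he1 : ‖e‖ = 1 := by rw [he, norm_smul, norm_inv, norm_norm, inv_mul_cancel₀ hdp.ne']
  have hde : d = ‖d‖ • e := by rw [he, smul_smul, mul_inv_cancel₀ hdp.ne', one_smul]
  let R := (Submodule.span ℝ {e})ᗮ.reflection
  let b0 := EuclideanSpace.basisFun (Fin n) ℝ
  let b1 := b0.map R
  have hR : ∀ v, v - R v = (2 * inner ℝ e v) • e := by
    intro v
    simp only [R]
    rw [Submodule.reflection_orthogonal_apply, Submodule.reflection_singleton_apply, he1]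
    simp [two_smul, two_mul, add_smul]
  have hterm : ∀ i, fderiv ℝ (fderiv ℝ G) x (b0 i) (b0 i) + fderiv ℝ (fderiv ℝ H) y (b1 i) (b1 i)
      + 8 * L * (inner ℝ e (b0 i)) ^ 2 ≤ 0 := by
    intro i
    set α := inner ℝ e (b0 i) with hα
    have hb1 : b1 i = R (b0 i) := by simp [b1]
    have hlin : ∀ t : ℝ, HasDerivAt (fun t : ℝ => ‖d‖ + t * (2 * α)) (2 * α) t := fun t => by
      simpa using ((hasDerivAt_id t).mul_const (2 * α)).const_add ‖d‖
    have hq : ∀ t : ℝ, HasDerivAt (fun t : ℝ => K * (‖d‖ + t * (2 * α))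
        - L * (‖d‖ + t * (2 * α)) ^ 2) (K * (2 * α) - L * (2 * (‖d‖ + t * (2 * α)) * (2 * α))) t :=
      fun t => by
        have := ((hlin t).const_mul K).sub (((hlin t).pow 2).const_mul L)
        exact this.congr_deriv (by norm_num)
    have hq2 : HasDerivAt (fun t : ℝ => K * (2 * α) - L * (2 * (‖d‖ + t * (2 * α)) * (2 * α)))
        (- (8 * L * α ^ 2)) 0 := by
      have := ((((hlin 0).const_mul 2).mul_const (2 * α)).const_mul L).const_sub (K * (2 * α))
      exact this.congr_deriv (by ring)
    refine second_deriv_nonpos (g := fun t => G (x + t • b0 i) + H (y + t • b1 i) -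
        (K * (‖d‖ + t * (2 * α)) - L * (‖d‖ + t * (2 * α)) ^ 2))
      (g' := fun t => fderiv ℝ G (x + t • b0 i) (b0 i) + fderiv ℝ H (y + t • b1 i) (b1 i) -
        (K * (2 * α) - L * (2 * (‖d‖ + t * (2 * α)) * (2 * α)))) ?_ ?_ ?_
    · filter_upwards [line_hasDerivAt hG (b0 i), line_hasDerivAt hH (b1 i)] with t h1 h2
      exact (h1.add h2).sub (hq t)
    · have := ((line_hasDerivAt_two hG (b0 i)).add (line_hasDerivAt_two hH (b1 i))).sub hq2
      exact this.congr_deriv (by ring)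
    · have hc : ContinuousAt (fun t : ℝ => (x + t • b0 i, y + t • b1 i)) 0 := by
        apply Continuous.continuousAt; fun_prop
      have hc' : Tendsto (fun t : ℝ => (x + t • b0 i, y + t • b1 i)) (𝓝 0) (𝓝 (x, y)) := by
        simpa using hc.tendsto
      have h1 := hc'.eventually hmax
      have h2 : ∀ᶠ t : ℝ in 𝓝 0, 0 < ‖d‖ + t * (2 * α) := by
        have hcc : ContinuousAt (fun t : ℝ => ‖d‖ + t * (2 * α)) 0 := (hlin 0).continuousAt
        exact hcc.eventually (lt_mem_nhds (by simpa using hdp))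
      filter_upwards [h1, h2] with t h1 h2
      have hn : ‖(x + t • b0 i) - (y + t • b1 i)‖ = ‖d‖ + t * (2 * α) := by
        have : (x + t • b0 i) - (y + t • b1 i) = (‖d‖ + t * (2 * α)) • e := by
          have h3 : (x + t • b0 i) - (y + t • b1 i) = d + t • (b0 i - R (b0 i)) := by
            rw [hd, hb1, smul_sub]; abel
          rw [h3, hR, add_smul, ← hde, smul_smul]
        rw [this, norm_smul, he1, mul_one, Real.norm_of_nonneg h2.le]
      simp only [hn] at h1
      simpa using h1
  have hsum := Finset.sum_nonpos (s := Finset.univ) (fun i _ => hterm i)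
  rw [Finset.sum_add_distrib, Finset.sum_add_distrib, ← lap_eq_sum_basis hG b0,
    ← lap_eq_sum_basis hH b1, ← Finset.mul_sum] at hsum
  have h1 : ∑ i, (inner ℝ e (b0 i)) ^ 2 = 1 := by
    have := b0.sum_sq_inner_right e
    have h2 : ∀ i, inner ℝ e (b0 i) = inner ℝ (b0 i) e := fun i => real_inner_comm _ _
    simp only [h2]
    rw [this, he1]; norm_num
  rw [h1] at hsum
  linarith

lemma doubling (hn : 5 ≤ n) {u : EuclideanSpace ℝ (Fin n) → ℝ} {r M A : ℝ} (hr : 0 < r)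
    (hM : 0 ≤ M) (hA : 0 ≤ A)
    (hu : ∀ x, x ≠ 0 → ‖x‖ ≤ r → ContDiffAt ℝ 2 u x)
    (hu0 : ∀ x, x ≠ 0 → ‖x‖ ≤ r → 0 ≤ u x)
    (huM : ∀ x, x ≠ 0 → ‖x‖ ≤ r → u x ≤ M)
    (hv0 : ∀ x, x ≠ 0 → ‖x‖ ≤ r → 0 ≤ - lap u x)
    (hvA : ∀ x, x ≠ 0 → ‖x‖ ≤ r → - lap u x ≤ A) :
    ∃ K N, 0 ≤ K ∧ 0 ≤ N ∧ ∀ x y, x ≠ 0 → y ≠ 0 → ‖x‖ ≤ r → ‖y‖ ≤ r →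
      u x - u y ≤ K * ‖x - y‖ + N * (‖x‖ ^ 2 + ‖y‖ ^ 2) := by
  have hn' : (5 : ℝ) ≤ n := by exact_mod_cast hn
  set N := (M + 1) / r ^ 2 with hN
  have hN0 : 0 < N := by positivity
  have hNr : N * r ^ 2 = M + 1 := by rw [hN]; field_simp
  set L := (A + 4 * n * N + 1) / 8 with hL
  have hL0 : 0 < L := by positivity
  set K := 2 * L * r with hK
  have hK0 : 0 < K := by positivity
  refine ⟨K, N, hK0.le, hN0.le, ?_⟩
  have main : ∀ κ > 0, ∀ x y, x ≠ 0 → y ≠ 0 → ‖x‖ ≤ r → ‖y‖ ≤ r →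
      (u x - (N * ‖x‖ ^ (2:ℝ) + κ * ‖x‖ ^ (-1:ℝ))) +
      (- u y - (N * ‖y‖ ^ (2:ℝ) + κ * ‖y‖ ^ (-1:ℝ))) -
        (K * ‖x - y‖ - L * ‖x - y‖ ^ 2) ≤ 0 := by
    intro κ hκ
    set B : EuclideanSpace ℝ (Fin n) → ℝ := fun x => N * ‖x‖ ^ (2:ℝ) + κ * ‖x‖ ^ (-1:ℝ) with hB
    set G : EuclideanSpace ℝ (Fin n) → ℝ := fun x => u x - B x with hG
    set H : EuclideanSpace ℝ (Fin n) → ℝ := fun x => - u x - B x with hH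
    set F : EuclideanSpace ℝ (Fin n) × EuclideanSpace ℝ (Fin n) → ℝ := fun z =>
      G z.1 + H z.2 - (K * ‖z.1 - z.2‖ - L * ‖z.1 - z.2‖ ^ 2) with hF
    have hBc : ∀ x, x ≠ 0 → ContDiffAt ℝ 2 B x := fun x hx => contDiffAt_two_pow _ _ _ _ hx
    have hGc : ∀ x, x ≠ 0 → ‖x‖ ≤ r → ContDiffAt ℝ 2 G x := fun x hx hxr =>
      (hu x hx hxr).sub (hBc x hx)
    have hHc : ∀ x, x ≠ 0 → ‖x‖ ≤ r → ContDiffAt ℝ 2 H x := fun x hx hxr =>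
      (hu x hx hxr).neg.sub (hBc x hx)
    have hB0 : ∀ x, x ≠ 0 → 0 < B x := fun x hx => by
      have hp := norm_pos_iff.2 hx
      simp only [hB]; positivity
    have hBl : ∀ x, x ≠ 0 → lap B x ≤ 2 * n * N := fun x hx => by
      have hp := norm_pos_iff.2 hx
      rw [hB, lap_two_pow _ _ _ _ hx]
      have e1 : ‖x‖ ^ ((2:ℝ) - 2) = 1 := by rw [sub_self, Real.rpow_zero]
      rw [e1]
      have h1 : 0 < κ * ‖x‖ ^ ((-1:ℝ) - 2) := by positivity
      nlinarith
    have hψ : ∀ x y : EuclideanSpace ℝ (Fin n), ‖x‖ ≤ r → ‖y‖ ≤ r →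
        0 ≤ K * ‖x - y‖ - L * ‖x - y‖ ^ 2 := by
      intro x y hx hy
      have h1 : ‖x - y‖ ≤ 2 * r := by linarith [norm_sub_le x y]
      have h2 := norm_nonneg (x - y)
      have : K * ‖x - y‖ - L * ‖x - y‖ ^ 2 = L * ‖x - y‖ * (2 * r - ‖x - y‖) := by rw [hK]; ring
      rw [this]
      exact mul_nonneg (by positivity) (by linarith)
    -- if either barrier is at least `M` then `F ≤ 0`
    have hFneg : ∀ z : EuclideanSpace ℝ (Fin n) × EuclideanSpace ℝ (Fin n), z.1 ≠ 0 → z.2 ≠ 0 →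
        ‖z.1‖ ≤ r → ‖z.2‖ ≤ r → (M ≤ B z.1 ∨ M ≤ B z.2) → F z ≤ 0 := by
      intro z h1 h2 h1r h2r h
      have a1 := huM _ h1 h1r
      have a2 := hu0 _ h2 h2r
      have a3 := hB0 _ h1
      have a4 := hB0 _ h2
      have a5 := hψ _ _ h1r h2r
      simp only [hF, hG, hH]
      rcases h with h | h <;> linarith
    have hBr : ∀ x : EuclideanSpace ℝ (Fin n), x ≠ 0 → ‖x‖ = r → M ≤ B x := by
      intro x hx hxr
      have hp := norm_pos_iff.2 hx
      have : 0 < κ * ‖x‖ ^ (-1:ℝ) := by positivity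
      simp only [hB]
      have e : ‖x‖ ^ (2:ℝ) = r ^ 2 := by rw [hxr]; norm_cast
      rw [e, hNr]; linarith
    set ρ := κ / (M + 1) with hρ
    have hρ0 : 0 < ρ := by positivity
    have hBρ : ∀ x : EuclideanSpace ℝ (Fin n), x ≠ 0 → ‖x‖ < ρ → M ≤ B x := by
      intro x hx hxr
      have hp := norm_pos_iff.2 hx
      have h1 : 0 < N * ‖x‖ ^ (2:ℝ) := by positivity
      have h2 : M + 1 ≤ κ * ‖x‖ ^ (-1:ℝ) := by
        rw [Real.rpow_neg_one, ← div_eq_mul_inv, le_div_iff₀ hp]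
        rw [hρ, lt_div_iff₀ (by positivity)] at hxr
        linarith
      simp only [hB]; linarith
    have hne : ∀ x : EuclideanSpace ℝ (Fin n), ρ ≤ ‖x‖ → x ≠ 0 := by
      rintro x hx rfl; simp at hx; linarith
    intro x y hx hy hxr hyr
    by_contra hcon
    push Not at hcon
    have hz1 : 0 < F (x, y) := hcon
    have hxρ : ρ ≤ ‖x‖ := by
      by_contra h
      push Not at h
      linarith [hFneg (x, y) hx hy hxr hyr (Or.inl (hBρ x hx h))]
    have hyρ : ρ ≤ ‖y‖ := by
      by_contra h
      push Not at h
      linarith [hFneg (x, y) hx hy hxr hyr (Or.inr (hBρ y hy h))]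
    have hKc := (isCompact_annulus (n := n) ρ r).prod (isCompact_annulus (n := n) ρ r)
    obtain ⟨z, hz, hzmax⟩ := hKc.exists_isMaxOn (f := F) ⟨(x, y), ⟨hxρ, hxr⟩, ⟨hyρ, hyr⟩⟩
      (fun z hz => by
        have c1 : ContinuousAt (fun z : EuclideanSpace ℝ (Fin n) × EuclideanSpace ℝ (Fin n) =>
          G z.1) z := ContinuousAt.comp (g := G)
            (hGc z.1 (hne _ hz.1.1) hz.1.2).continuousAt continuousAt_fst
        have c2 : ContinuousAt (fun z : EuclideanSpace ℝ (Fin n) × EuclideanSpace ℝ (Fin n) =>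
          H z.2) z := ContinuousAt.comp (g := H)
            (hHc z.2 (hne _ hz.2.1) hz.2.2).continuousAt continuousAt_snd
        have c3 : ContinuousAt (fun z : EuclideanSpace ℝ (Fin n) × EuclideanSpace ℝ (Fin n) =>
          K * ‖z.1 - z.2‖ - L * ‖z.1 - z.2‖ ^ 2) z := by
          apply Continuous.continuousAt; fun_prop
        exact ((c1.add c2).sub c3).continuousWithinAt)
    have hFz : 0 < F z := lt_of_lt_of_le hz1 (hzmax (a := (x, y)) ⟨⟨hxρ, hxr⟩, ⟨hyρ, hyr⟩⟩)
    have h10 := hne _ hz.1.1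
    have h20 := hne _ hz.2.1
    have h1r : ‖z.1‖ < r := lt_of_le_of_ne hz.1.2 fun h => by
      linarith [hFneg z h10 h20 hz.1.2 hz.2.2 (Or.inl (hBr _ h10 h))]
    have h2r : ‖z.2‖ < r := lt_of_le_of_ne hz.2.2 fun h => by
      linarith [hFneg z h10 h20 hz.1.2 hz.2.2 (Or.inr (hBr _ h20 h))]
    have h12 : z.1 ≠ z.2 := by
      intro h
      have : F z = - B z.1 - B z.1 := by
        simp only [hF, hG, hH]; rw [← h]; simp; ring
      linarith [hB0 _ h10]
    have hloc : IsLocalMax F (z.1, z.2) := by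
      have o1 : IsOpen {w : EuclideanSpace ℝ (Fin n) | w ≠ 0 ∧ ‖w‖ < r} :=
        isOpen_ne.inter (isOpen_lt continuous_norm continuous_const)
      have m : ∀ᶠ w in 𝓝 (z.1, z.2), w.1 ∈ {w : EuclideanSpace ℝ (Fin n) | w ≠ 0 ∧ ‖w‖ < r} ∧
          w.2 ∈ {w : EuclideanSpace ℝ (Fin n) | w ≠ 0 ∧ ‖w‖ < r} :=
        (o1.prod o1).mem_nhds ⟨⟨h10, h1r⟩, ⟨h20, h2r⟩⟩
      filter_upwards [m] with w hw
      have hw1 := hw.1.2.le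
      have hw2 := hw.2.2.le
      show F w ≤ F z
      rcases lt_or_ge ‖w.1‖ ρ with h | h
      · linarith [hFneg w hw.1.1 hw.2.1 hw1 hw2 (Or.inl (hBρ _ hw.1.1 h))]
      rcases lt_or_ge ‖w.2‖ ρ with h' | h'
      · linarith [hFneg w hw.1.1 hw.2.1 hw1 hw2 (Or.inr (hBρ _ hw.2.1 h'))]
      exact hzmax (a := w) ⟨⟨h, hw1⟩, ⟨h', hw2⟩⟩
    have key := doubling_max (hGc _ h10 hz.1.2) (hHc _ h20 hz.2.2) h12 hloc
    rw [hG, hH, lap_sub (hu _ h10 hz.1.2) (hBc _ h10),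
      lap_sub (hu _ h20 hz.2.2).neg (hBc _ h20), lap_neg (hu _ h20 hz.2.2)] at key
    have b1 := hBl _ h10
    have b2 := hBl _ h20
    have b3 := hvA _ h10 hz.1.2
    have b4 := hv0 _ h20 hz.2.2
    have : 8 * L = A + 4 * n * N + 1 := by rw [hL]; ring
    linarith
  intro x y hx hy hxr hyr
  have hxp := norm_pos_iff.2 hx
  have hyp := norm_pos_iff.2 hy
  refine le_of_forall_add_mul (z := ‖x‖ ^ (-1:ℝ) + ‖y‖ ^ (-1:ℝ)) (by positivity) fun κ hκ => ?_
  have := main κ hκ x y hx hy hxr hyr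
  simp only [Real.rpow_two] at this
  have : 0 ≤ L * ‖x - y‖ ^ 2 := by positivity
  linarith

end doubling

section final
variable {n : ℕ}

lemma exists_ext (hn : 5 ≤ n) {u : EuclideanSpace ℝ (Fin n) → ℝ} {r D : ℝ} (hr : 0 < r)
    (hD : 0 ≤ D)
    (hu : ContinuousOn u (ball 0 1 \ {0}))
    (h : ∀ x y, x ≠ 0 → y ≠ 0 → ‖x‖ ≤ r → ‖y‖ ≤ r → u x - u y ≤ D * (‖x‖ + ‖y‖)) :
    ∃ g : EuclideanSpace ℝ (Fin n) → ℝ, ContinuousOn g (ball 0 1) ∧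
      ∀ x ∈ ball (0 : EuclideanSpace ℝ (Fin n)) 1 \ {0}, g x = u x := by
  haveI : Nonempty (Fin n) := ⟨⟨0, by omega⟩⟩
  haveI : NeBot (𝓝[≠] (0 : EuclideanSpace ℝ (Fin n))) := Module.punctured_nhds_neBot ℝ _ 0
  have hc : Cauchy (map u (𝓝[≠] (0 : EuclideanSpace ℝ (Fin n)))) := by
    rw [Metric.cauchy_iff]
    refine ⟨inferInstance, fun ε hε => ?_⟩
    set δ := min r (ε / (2 * D + 1) / 2) with hδ
    have hδ0 : 0 < δ := by positivity
    refine ⟨u '' (ball 0 δ ∩ {0}ᶜ), image_mem_map (Filter.inter_mem (mem_nhdsWithin_of_mem_nhds (ball_mem_nhds 0 hδ0)) self_mem_nhdsWithin), ?_⟩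
    rintro _ ⟨x, hx, rfl⟩ _ ⟨y, hy, rfl⟩
    have hx1 : ‖x‖ < δ := by simpa using hx.1
    have hy1 : ‖y‖ < δ := by simpa using hy.1
    have hr1 : δ ≤ r := min_le_left _ _
    have h1 := h x y hx.2 hy.2 (by linarith) (by linarith)
    have h2 := h y x hy.2 hx.2 (by linarith) (by linarith)
    have h3 : D * (‖x‖ + ‖y‖) < ε := by
      have e1 : δ ≤ ε / (2 * D + 1) / 2 := min_le_right _ _
      have e2 : D * (‖x‖ + ‖y‖) ≤ D * (2 * (ε / (2 * D + 1) / 2)) := by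
        apply mul_le_mul_of_nonneg_left _ hD; linarith
      have e3 : D * (2 * (ε / (2 * D + 1) / 2)) < ε := by
        have : D * (2 * (ε / (2 * D + 1) / 2)) = ε * (D / (2 * D + 1)) := by field_simp
        rw [this]
        have : D / (2 * D + 1) < 1 := by rw [div_lt_one (by positivity)]; linarith
        nlinarith
      linarith
    rw [Real.dist_eq, abs_lt]
    constructor <;> linarith
  obtain ⟨l, hl⟩ := cauchy_map_iff_exists_tendsto.1 hc
  refine ⟨Function.update u 0 l, ?_, fun x hx => Function.update_of_ne (by simpa using hx.2) _ _⟩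
  intro x hx
  apply ContinuousAt.continuousWithinAt
  by_cases hx0 : x = 0
  · subst hx0
    exact continuousAt_update_same.2 hl
  · rw [continuousAt_update_of_ne hx0]
    exact hu.continuousAt (isOpen_punct.mem_nhds ⟨hx, hx0⟩)

lemma vnorm_nonneg {p : ℕ} (U : Fin p → EuclideanSpace ℝ (Fin n) → ℝ)
    (x : EuclideanSpace ℝ (Fin n)) : 0 ≤ vnorm U x := Real.sqrt_nonneg _

lemma le_vnorm {p : ℕ} (U : Fin p → EuclideanSpace ℝ (Fin n) → ℝ)
    (x : EuclideanSpace ℝ (Fin n)) (i : Fin p) : U i x ≤ vnorm U x :=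
  Real.le_sqrt_of_sq_le (Finset.single_le_sum (f := fun i => U i x ^ 2)
    (fun _ _ => sq_nonneg _) (Finset.mem_univ i))

lemma vnorm_le {p : ℕ} (U : Fin p → EuclideanSpace ℝ (Fin n) → ℝ)
    (x : EuclideanSpace ℝ (Fin n)) {X : ℝ} (hX : 0 ≤ X) (h0 : ∀ i, 0 ≤ U i x)
    (h : ∀ i, U i x ≤ X) : vnorm U x ≤ Real.sqrt p * X := by
  apply Real.sqrt_le_iff.2
  refine ⟨by positivity, ?_⟩
  rw [mul_pow, Real.sq_sqrt (by positivity)]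
  calc ∑ i, U i x ^ 2 ≤ ∑ _i : Fin p, X ^ 2 :=
        Finset.sum_le_sum fun i _ => pow_le_pow_left₀ (h0 i) (h i) 2
    _ = p * X ^ 2 := by simp

end final

/-- removability of the singularity in the Gidas–Spruck range
`n/(n-4) < s < (n+4)/(n-4)` when `|U(x)| = o(|x|^{-4/(s-1)})` as `x → 0`. -/
theorem statement18 (n p : ℕ) (hn : 5 ≤ n) (hp : 1 ≤ p) (s : ℝ)
    (hs1 : (n : ℝ) / ((n : ℝ) - 4) < s) (hs2 : s < ((n : ℝ) + 4) / ((n : ℝ) - 4))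
    (U : Fin p → EuclideanSpace ℝ (Fin n) → ℝ)
    (hnonneg : ∀ i, ∀ x ∈ Metric.ball (0 : EuclideanSpace ℝ (Fin n)) 1 \ {0}, 0 ≤ U i x)
    (hC4 : ∀ i, ContDiffOn ℝ 4 (U i)
      (Metric.ball (0 : EuclideanSpace ℝ (Fin n)) 1 \ {0}))
    (hsuper : ∀ i, ∀ x ∈ Metric.ball (0 : EuclideanSpace ℝ (Fin n)) 1 \ {0},
      0 < -lap (U i) x)
    (hpde : ∀ i, ∀ x ∈ Metric.ball (0 : EuclideanSpace ℝ (Fin n)) 1 \ {0},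
      bilap (U i) x = (vnorm U x) ^ (s - 1) * U i x)
    (hlittleo : Tendsto
      (fun x : EuclideanSpace ℝ (Fin n) => ‖x‖ ^ (4 / (s - 1)) * vnorm U x)
      (𝓝[Metric.ball (0 : EuclideanSpace ℝ (Fin n)) 1 \ {0}] 0) (𝓝 0)) :
    ∀ i, ∃ g : EuclideanSpace ℝ (Fin n) → ℝ,
      ContinuousOn g (Metric.ball (0 : EuclideanSpace ℝ (Fin n)) 1) ∧
      ∀ x ∈ Metric.ball (0 : EuclideanSpace ℝ (Fin n)) 1 \ {0}, g x = U i x := by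
  intro i0
  have hn' : (5 : ℝ) ≤ n := by exact_mod_cast hn
  have hn4 : (0 : ℝ) < n - 4 := by linarith
  have hs4 : 4 < (s - 1) * (n - 4) := by
    rw [div_lt_iff₀ hn4] at hs1; linarith
  have hs0 : 0 < s - 1 := by
    by_contra h
    push Not at h
    nlinarith
  set γ := 4 / (s - 1) with hγ
  have hγ0 : 0 < γ := by positivity
  have hγn : γ < n - 4 := by rw [hγ, div_lt_iff₀ hs0]; linarith
  have hγs : γ * (s - 1) = 4 := by rw [hγ]; field_simp
  have hsmall : ∀ ε > 0, ∃ ρ > 0, ∀ x : EuclideanSpace ℝ (Fin n), x ≠ 0 → ‖x‖ < ρ →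
      vnorm U x ≤ ε * ‖x‖ ^ (-γ) := by
    intro ε hε
    have h1 := hlittleo.eventually (gt_mem_nhds hε)
    rw [eventually_nhdsWithin_iff, Metric.eventually_nhds_iff] at h1
    obtain ⟨ρ, hρ, h1⟩ := h1
    refine ⟨min ρ 1, by positivity, fun x hx hxρ => ?_⟩
    have hpos := norm_pos_iff.2 hx
    have h2 := h1 (y := x) (by simpa using hxρ.trans_le (min_le_left _ _))
      (mem_punct hx (hxρ.trans_le (min_le_right _ _)))
    rw [Real.rpow_neg hpos.le, ← div_eq_mul_inv, le_div_iff₀ (by positivity)]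
    linarith
  have hV : ∀ ε > 0, ∃ ρ > 0, ∀ x : EuclideanSpace ℝ (Fin n), x ≠ 0 → ‖x‖ < ρ →
      (vnorm U x) ^ (s - 1) ≤ ε * ‖x‖ ^ (-4 : ℝ) := by
    intro ε hε
    obtain ⟨ρ, hρ, h1⟩ := hsmall (ε ^ (s - 1)⁻¹) (by positivity)
    refine ⟨ρ, hρ, fun x hx hxρ => ?_⟩
    have hpos := norm_pos_iff.2 hx
    calc (vnorm U x) ^ (s - 1) ≤ (ε ^ (s - 1)⁻¹ * ‖x‖ ^ (-γ)) ^ (s - 1) :=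
          Real.rpow_le_rpow (vnorm_nonneg U x) (h1 x hx hxρ) hs0.le
      _ = _ := by
          rw [Real.mul_rpow (by positivity) (by positivity), ← Real.rpow_mul hε.le,
            inv_mul_cancel₀ hs0.ne', Real.rpow_one, ← Real.rpow_mul hpos.le, neg_mul, hγs]
  obtain ⟨ρ0, hρ0, hgr⟩ := hsmall 1 one_pos
  set a := min (γ / 2) (min (1 / 4) (1 / s)) with ha
  have hs : 0 < s := by linarith
  have ha0 : 0 < a := by positivity
  have haγ : a < γ := (min_le_left _ _).trans_lt (by linarith)
  have ha4 : a ≤ 1 / 4 := (min_le_right _ _).trans (min_le_left _ _)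
  have has : a * s ≤ 1 := by
    rw [← le_div_iff₀ hs]; exact (min_le_right _ _).trans (min_le_right _ _)
  have hdec := fun i => decay hn (u := U i) (V := fun x => (vnorm U x) ^ (s - 1)) (C0 := 1)
    ha0 haγ hγn (hC4 i) (fun x hx hx1 => hnonneg i x (mem_punct hx hx1))
    (fun x hx hx1 => hpde i x (mem_punct hx hx1)) hV hρ0 zero_le_one
    (fun x hx hx1 => (le_vnorm U x i).trans (hgr x hx hx1))
  choose rr AA hr0 hr1 hA0 hdec using hdec
  haveI : Nonempty (Fin p) := ⟨i0⟩
  obtain ⟨j, hj⟩ := Finite.exists_min rr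
  obtain ⟨k, hk⟩ := Finite.exists_max AA
  set r := rr j with hr
  set A := AA k with hA
  have hr_0 : 0 < r := hr0 j
  have hr_1 : r < 1 := hr1 j
  have hA_0 : 0 ≤ A := hA0 k
  have hall : ∀ i x, x ≠ 0 → ‖x‖ ≤ r →
      U i x ≤ A * ‖x‖ ^ (-a) ∧ - lap (U i) x ≤ A * ‖x‖ ^ (-a - 2) := by
    intro i x hx hxr
    have hpos := norm_pos_iff.2 hx
    have h := hdec i x hx (hxr.trans (hj i))
    exact ⟨h.1.trans (mul_le_mul_of_nonneg_right (hk i) (by positivity)),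
      h.2.trans (mul_le_mul_of_nonneg_right (hk i) (by positivity))⟩
  have hmem : ∀ x : EuclideanSpace ℝ (Fin n), x ≠ 0 → ‖x‖ ≤ r →
      x ∈ Metric.ball (0 : EuclideanSpace ℝ (Fin n)) 1 \ {0} :=
    fun x hx hxr => mem_punct hx (by linarith)
  have hcu : ∀ x, x ≠ 0 → ‖x‖ ≤ r → ContDiffAt ℝ 2 (U i0) x := fun x hx hxr =>
    ((hC4 i0).contDiffAt (isOpen_punct.mem_nhds (hmem x hx hxr))).of_le (by norm_num)
  have hcl : ∀ x, x ≠ 0 → ‖x‖ ≤ r → ContDiffAt ℝ 2 (lap (U i0)) x := fun x hx hxr =>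
    (contDiffOn_lap isOpen_punct (hC4 i0)).contDiffAt (isOpen_punct.mem_nhds (hmem x hx hxr))
  have hcv : ∀ x, x ≠ 0 → ‖x‖ ≤ r → ContDiffAt ℝ 2 (fun x => - lap (U i0) x) x :=
    fun x hx hxr => (hcl x hx hxr).neg
  set C1 := (Real.sqrt p * A) ^ (s - 1) * A with hC1
  have hC10 : 0 ≤ C1 := by positivity
  have hVu : ∀ x, x ≠ 0 → ‖x‖ ≤ r → (vnorm U x) ^ (s - 1) * U i0 x ≤ C1 * ‖x‖ ^ (-1 : ℝ) := by
    intro x hx hxr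
    have hpos := norm_pos_iff.2 hx
    have h1 := vnorm_le U x (X := A * ‖x‖ ^ (-a)) (by positivity)
      (fun i => hnonneg i x (hmem x hx hxr)) (fun i => (hall i x hx hxr).1)
    have h2 : (vnorm U x) ^ (s - 1) ≤ (Real.sqrt p * (A * ‖x‖ ^ (-a))) ^ (s - 1) :=
      Real.rpow_le_rpow (vnorm_nonneg U x) h1 hs0.le
    have h3 : (Real.sqrt p * (A * ‖x‖ ^ (-a))) ^ (s - 1) =
        (Real.sqrt p * A) ^ (s - 1) * ‖x‖ ^ (-a * (s - 1)) := by
      rw [← mul_assoc, Real.mul_rpow (by positivity) (by positivity), ← Real.rpow_mul hpos.le]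
    have h4 : ‖x‖ ^ (-a * (s - 1)) * ‖x‖ ^ (-a) = ‖x‖ ^ (-(a * s)) := by
      rw [← Real.rpow_add hpos]; congr 1; ring
    have h5 : ‖x‖ ^ (-(a * s)) ≤ ‖x‖ ^ (-1 : ℝ) :=
      Real.rpow_le_rpow_of_exponent_ge hpos (by linarith) (by linarith)
    calc (vnorm U x) ^ (s - 1) * U i0 x
        ≤ ((Real.sqrt p * A) ^ (s - 1) * ‖x‖ ^ (-a * (s - 1))) * (A * ‖x‖ ^ (-a)) :=
          mul_le_mul (h2.trans_eq h3) (hall i0 x hx hxr).1 (hnonneg i0 x (hmem x hx hxr))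
            (by positivity)
      _ = C1 * (‖x‖ ^ (-a * (s - 1)) * ‖x‖ ^ (-a)) := by rw [hC1]; ring
      _ ≤ _ := by rw [h4]; exact mul_le_mul_of_nonneg_left h5 hC10
  obtain ⟨Mv, hMv0, hMv⟩ := bdd_above hn (w := fun x => - lap (U i0) x) (c := a + 2)
    (C := max A C1) hr_0 (by linarith) (le_max_of_le_left hA_0) hcv
    (fun x hx hxr => by
      have hpos := norm_pos_iff.2 hx
      rw [neg_add']
      exact (hall i0 x hx hxr).2.trans
        (mul_le_mul_of_nonneg_right (le_max_left _ _) (by positivity)))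
    (fun x hx hxr => by
      have hpos := norm_pos_iff.2 hx
      rw [lap_neg (hcl x hx hxr), neg_neg]
      have e : lap (lap (U i0)) x = _ := hpde i0 x (hmem x hx hxr)
      rw [e]
      exact (hVu x hx hxr).trans
        (mul_le_mul_of_nonneg_right (le_max_right _ _) (by positivity)))
  obtain ⟨Mu, hMu0, hMu⟩ := bdd_above hn (w := U i0) (c := a)
    (C := max A Mv) hr_0 (by linarith) (le_max_of_le_left hA_0) hcu
    (fun x hx hxr => by
      have hpos := norm_pos_iff.2 hx
      exact (hall i0 x hx hxr).1.trans
        (mul_le_mul_of_nonneg_right (le_max_left _ _) (by positivity)))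
    (fun x hx hxr => by
      have hpos := norm_pos_iff.2 hx
      have h1 : 1 ≤ ‖x‖ ^ (-1 : ℝ) :=
        Real.one_le_rpow_of_pos_of_le_one_of_nonpos hpos (by linarith) (by norm_num)
      calc - lap (U i0) x ≤ Mv * 1 := by rw [mul_one]; exact hMv x hx hxr
        _ ≤ max A Mv * ‖x‖ ^ (-1 : ℝ) :=
          mul_le_mul (le_max_right _ _) h1 zero_le_one (le_max_of_le_left hA_0))
  obtain ⟨K, N, hK0, hN0, hKN⟩ := doubling hn hr_0 hMu0 hMv0 hcu
    (fun x hx hxr => hnonneg i0 x (hmem x hx hxr)) hMu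
    (fun x hx hxr => (hsuper i0 x (hmem x hx hxr)).le) hMv
  refine exists_ext hn (D := K + N) hr_0 (by positivity) (hC4 i0).continuousOn ?_
  intro x y hx hy hxr hyr
  have h1 := hKN x y hx hy hxr hyr
  have h2 := norm_sub_le x y
  have h3 : ‖x‖ ^ 2 ≤ ‖x‖ := by nlinarith [norm_nonneg x]
  have h4 : ‖y‖ ^ 2 ≤ ‖y‖ := by nlinarith [norm_nonneg y]
  have h5 := mul_le_mul_of_nonneg_left h2 hK0
  have h6 := mul_le_mul_of_nonneg_left (add_le_add h3 h4) hN0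
  linarith
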